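/- Every 5-connected nonplanar apex graph contains a subdivision of K₅ or contains K₄ minus an edge as a subgraph. -/

import Mathlib

open SimpleGraph

variable {V : Type*}

/-- `K₄⁻` (two triangles sharing the edge `ab`; the edge `cd` may be absent)
occurs as a subgraph of `G`. -/
def containsK4minus (G : SimpleGraph V) : Prop :=
  ∃ a b c d : V, a ≠ b ∧ a ≠ c ∧ a ≠ d ∧ b ≠ c ∧ b ≠ d ∧ c ≠ d ∧
    G.Adj a b ∧ G.Adj a c ∧ G.Adj a d ∧ G.Adj b c ∧ G.Adj b d

/-- `G` contains a subdivision of `K₅`: five branch vertices joined by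
pairwise internally disjoint paths. -/
def containsK5Subdivision (G : SimpleGraph V) : Prop :=
  ∃ (b : Fin 5 → V) (P : ∀ i j : Fin 5, G.Walk (b i) (b j)),
    Function.Injective b ∧
    (∀ i j, i ≠ j → (P i j).IsPath) ∧
    (∀ i j, i ≠ j → ∀ k, b k ∈ (P i j).support → k = i ∨ k = j) ∧
    (∀ i j i' j', i < j → i' < j' → (i, j) ≠ (i', j') →
      ∀ x, x ∈ (P i j).support → x ∈ (P i' j').support → x = b i ∨ x = b j)

/-- `G` has an `H`-minor (branch sets are connected, disjoint, joined by edges). -/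
def HasMinor {W : Type*} (G : SimpleGraph V) (H : SimpleGraph W) : Prop :=
  ∃ f : W → Set V,
    (∀ w, (G.induce (f w)).Connected) ∧
    (∀ w₁ w₂, w₁ ≠ w₂ → Disjoint (f w₁) (f w₂)) ∧
    (∀ w₁ w₂, H.Adj w₁ w₂ → ∃ x ∈ f w₁, ∃ y ∈ f w₂, G.Adj x y)

/-- Planarity, via Wagner's theorem: no `K₅` and no `K₃,₃` minor. -/
def IsPlanar (G : SimpleGraph V) : Prop :=
  ¬ HasMinor G (completeGraph (Fin 5)) ∧
  ¬ HasMinor G (completeBipartiteGraph (Fin 3) (Fin 3))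

/-- `G` is `k`-connected: more than `k` vertices, and removing fewer than `k`
vertices leaves a connected graph. -/
def IsKConnected (k : ℕ) (G : SimpleGraph V) : Prop :=
  k < (Set.univ : Set V).ncard ∧
  ∀ S : Set V, S.Finite → S.ncard < k → (G.induce Sᶜ).Connected

/-- Boundary of a subgraph `H` of `G`: vertices of `H` incident with an edge
of `G` not in `H`. -/
def bnd (G : SimpleGraph V) (H : G.Subgraph) : Set V :=
  {v | v ∈ H.verts ∧ ∃ w, G.Adj v w ∧ ¬ H.Adj v w}

/-- A `k`-hammock: connected subgraph with boundary of size `k`. -/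
def IsHammock (G : SimpleGraph V) (k : ℕ) (H : G.Subgraph) : Prop :=
  H.Connected ∧ (bnd G H).ncard = k

def TrivialHammock (G : SimpleGraph V) (H : G.Subgraph) : Prop :=
  H.verts = bnd G H

def DegenerateHammock (G : SimpleGraph V) (H : G.Subgraph) : Prop :=
  H.verts.ncard = (bnd G H).ncard + 1

def FatHammock (G : SimpleGraph V) (H : G.Subgraph) : Prop :=
  (bnd G H).ncard + 2 ≤ H.verts.ncard

/-- A `4`-hammock is minimal if all its proper `4`-hammocks are trivial or degenerate. -/
def Minimal4Hammock (G : SimpleGraph V) (H : G.Subgraph) : Prop :=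
  IsHammock G 4 H ∧
  ∀ H' : G.Subgraph, H' ≤ H → H' ≠ H → IsHammock G 4 H' →
    TrivialHammock G H' ∨ DegenerateHammock G H'

def MinimalFat4Hammock (G : SimpleGraph V) (H : G.Subgraph) : Prop :=
  Minimal4Hammock G H ∧ FatHammock G H

/-- The list `l` records a cycle of `G` (vertices in clockwise order). -/
def IsCycleList (G : SimpleGraph V) (l : List V) : Prop :=
  l.Nodup ∧ 3 ≤ l.length ∧
    ∀ i : Fin l.length,
      G.Adj (l.get i) (l.get ⟨((i : ℕ) + 1) % l.length, Nat.mod_lt _ i.pos⟩)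

/-- `x` and `y` are consecutive on the cyclic list `C`. -/
def CycAdj (C : List V) (x y : V) : Prop :=
  ∃ i : Fin C.length,
    (C.get i = x ∧ C.get ⟨((i : ℕ) + 1) % C.length, Nat.mod_lt _ i.pos⟩ = y) ∨
    (C.get i = y ∧ C.get ⟨((i : ℕ) + 1) % C.length, Nat.mod_lt _ i.pos⟩ = x)

/-- Clockwise (forward) distance between positions on a cycle of length `n`. -/
def cycDist (n i j : ℕ) : ℕ := (j + n - i) % n

/-- The open segment of the cycle `C` from `a` clockwise to `b`. -/
def segOpen (C : List V) (a b : V) : Set V :=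
  {x | ∃ i j k : Fin C.length, C.get i = a ∧ C.get j = b ∧ C.get k = x ∧
    k ≠ i ∧ k ≠ j ∧ cycDist C.length (i : ℕ) (k : ℕ) < cycDist C.length (i : ℕ) (j : ℕ)}

/-- The closed segment of the cycle `C` from `a` clockwise to `b`. -/
def segClosed (C : List V) (a b : V) : Set V := segOpen C a b ∪ {a, b}

/-- `a 0, a 1, a 2, a 3` appear in this clockwise order along the cycle `C`. -/
def ClockwiseOn (C : List V) (a : Fin 4 → V) : Prop :=
  ∃ p : Fin 4 → Fin C.length, (∀ j, C.get (p j) = a j) ∧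
    ∀ j k : Fin 4, j < k →
      cycDist C.length ((p 0 : Fin C.length) : ℕ) ((p j : Fin C.length) : ℕ) <
        cycDist C.length ((p 0 : Fin C.length) : ℕ) ((p k : Fin C.length) : ℕ)

/-- `x` and `y` are consecutive among the points of `S` on the cycle `C`:
one of the two open arcs between them misses `S`. -/
def ConsecutiveOn (C : List V) (S : Set V) (x y : V) : Prop :=
  segOpen C x y ∩ S = ∅ ∨ segOpen C y x ∩ S = ∅

/-- A combinatorial plane graph: a graph together with its facial cycles and a
distinguished outer face; every edge lies on exactly two faces and every vertex
on exactly `deg` faces (valid for `2`-connected plane graphs). -/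
structure PlaneGraph (V : Type*) where
  graph : SimpleGraph V
  faces : Finset (List V)
  outer : List V
  outer_mem : outer ∈ faces
  faces_cycle : ∀ f ∈ faces, IsCycleList graph f
  edge_two_faces : ∀ x y, graph.Adj x y →
    {f ∈ (faces : Set (List V)) | CycAdj f x y}.ncard = 2
  vertex_faces : ∀ v : V,
    {f ∈ (faces : Set (List V)) | v ∈ f}.ncard = (graph.neighborSet v).ncard

def Cofacial (P : PlaneGraph V) (u w : V) : Prop :=
  ∃ f ∈ P.faces, u ∈ f ∧ w ∈ f

/-- `C` is the rim of the facial wheel `S_u`: the induced cycle on the vertices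
cofacial with `u`, containing `N(u)` and separating `u` from the rest of the graph. -/
def IsFacialRim (P : PlaneGraph V) (u : V) (C : List V) : Prop :=
  IsCycleList P.graph C ∧ u ∉ C ∧
  (∀ w, w ∈ C ↔ (w ≠ u ∧ Cofacial P u w)) ∧
  P.graph.neighborSet u ⊆ {x | x ∈ C} ∧
  (∀ x ∈ C, ∀ y ∈ C, P.graph.Adj x y → CycAdj C x y) ∧
  (∀ w, w ∉ C → w ≠ u → ∀ p : P.graph.Walk u w, ∃ x ∈ p.support, x ∈ C)

/-- The facial wheel `S_u` (hub `u`, spokes, and rim `C`) is a subgraph of `H`. -/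
def WheelIn (G : SimpleGraph V) (H : G.Subgraph) (u : V) (C : List V) : Prop :=
  u ∈ H.verts ∧ (∀ x ∈ C, x ∈ H.verts) ∧
  (∀ x, G.Adj u x → H.Adj u x) ∧
  (∀ x y, CycAdj C x y → H.Adj x y)

/-- A system of `k` pairwise vertex-disjoint `(A,B)`-paths inside the subgraph `H`,
internally disjoint from `A ∪ B`. -/
structure Linkage (G : SimpleGraph V) (H : G.Subgraph) (A B : Set V) (k : ℕ) where
  s : Fin k → V
  t : Fin k → V
  walk : ∀ i, G.Walk (s i) (t i)
  isPath : ∀ i, (walk i).IsPath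
  support_mem : ∀ i, ∀ x ∈ (walk i).support, x ∈ H.verts
  edges_mem : ∀ i, ∀ e ∈ (walk i).edges, e ∈ H.edgeSet
  s_mem : ∀ i, s i ∈ A
  t_mem : ∀ i, t i ∈ B
  internal : ∀ i, ∀ x ∈ (walk i).support, x ≠ s i → x ≠ t i → x ∉ A ∧ x ∉ B
  disj : ∀ i j, i ≠ j → ∀ x ∈ (walk i).support, x ∉ (walk j).support

/-- A `C_u`-linkage: a `(bnd H, C)`-4-linkage in `H`. -/
abbrev CuLinkage (G : SimpleGraph V) (H : G.Subgraph) (C : List V) :=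
  Linkage G H (bnd G H) {x | x ∈ C} 4

/-- `α(L)`: the number of endpoints of the linkage lying in `N(u)`. -/
noncomputable def lAlpha (G : SimpleGraph V) (u : V) {H : G.Subgraph} {A B : Set V} {k : ℕ}
    (L : Linkage G H A B k) : ℕ :=
  {i : Fin k | L.t i ∈ G.neighborSet u}.ncard

/-- Data of a short wheel: the four neighbours of `u` in clockwise rim order,
two edge-disjoint triangles at `u`, and the two remaining rim segments of
order between 2 and 4, not both of order 4. -/
def ShortWheelOn (G : SimpleGraph V) (u : V) (C : List V) (n : Fin 4 → V) : Prop :=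
  ClockwiseOn C n ∧ Set.range n = G.neighborSet u ∧
  G.Adj (n 0) (n 1) ∧ G.Adj (n 2) (n 3) ∧
  (segOpen C (n 1) (n 2)).ncard ≤ 2 ∧ (segOpen C (n 3) (n 0)).ncard ≤ 2 ∧
  ¬((segOpen C (n 1) (n 2)).ncard = 2 ∧ (segOpen C (n 3) (n 0)).ncard = 2)

def IsShortWheel (G : SimpleGraph V) (u : V) (C : List V) : Prop :=
  (G.neighborSet u).ncard = 4 ∧ ∃ n, ShortWheelOn G u C n

/-- A short wheel which, if imbalanced (a segment of order 4), is proper with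
respect to the boundary set `B`: the interior of that segment avoids `B`. -/
def IsShortProperWheel (G : SimpleGraph V) (u : V) (C : List V) (B : Set V) : Prop :=
  (G.neighborSet u).ncard = 4 ∧ ∃ n, ShortWheelOn G u C n ∧
    ((segOpen C (n 1) (n 2)).ncard = 2 → segOpen C (n 1) (n 2) ∩ B = ∅) ∧
    ((segOpen C (n 3) (n 0)).ncard = 2 → segOpen C (n 3) (n 0) ∩ B = ∅)


section Core

open Classical

set_option linter.unusedSectionVars false

variable {W : Type*} [Fintype W] (H : SimpleGraph W)

/-- cut-based connectivity of a finite vertex set -/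
def Conn (S : Finset W) : Prop :=
  S.Nonempty ∧ ∀ Z ⊆ S, Z.Nonempty → Z ≠ S → ∃ u ∈ Z, ∃ v ∈ S, v ∉ Z ∧ H.Adj u v

/-- two vertex sets are joined by an edge -/
def Tch (S T : Finset W) : Prop := ∃ u ∈ S, ∃ v ∈ T, H.Adj u v

/-- an induced cycle with connected complement -/
def IsFace (C : Finset W) : Prop :=
  Conn H C ∧ Conn H Cᶜ ∧ ∀ x ∈ C, (C.filter (H.Adj x)).card = 2

variable {H}

lemma Tch.symm {S T : Finset W} (h : Tch H S T) : Tch H T S := by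
  obtain ⟨u, hu, v, hv, h⟩ := h
  exact ⟨v, hv, u, hu, h.symm⟩

lemma Tch.mono {S T S' T' : Finset W} (h : Tch H S T) (h1 : S ⊆ S') (h2 : T ⊆ T') :
    Tch H S' T' := by
  obtain ⟨u, hu, v, hv, h⟩ := h
  exact ⟨u, h1 hu, v, h2 hv, h⟩

lemma conn_singleton (x : W) : Conn H {x} := by
  refine ⟨by simp, ?_⟩
  intro Z hZ hne hneq
  rcases Finset.subset_singleton_iff.1 hZ with h | h
  · simp [h] at hne
  · exact absurd h hneq

lemma conn_union_aux {S T : Finset W} (hS : Conn H S) (hT : Conn H T)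
    (h : Tch H S T ∨ ∃ x, x ∈ S ∧ x ∈ T) : Conn H (S ∪ T) := by
  refine ⟨hS.1.mono Finset.subset_union_left, ?_⟩
  intro Z hZ hne hneq
  by_cases h1 : (Z ∩ S).Nonempty ∧ Z ∩ S ≠ S
  · obtain ⟨u, hu, v, hv, hvZ, ha⟩ := hS.2 (Z ∩ S) Finset.inter_subset_right h1.1 h1.2
    refine ⟨u, (Finset.mem_inter.1 hu).1, v, Finset.mem_union_left _ hv, ?_, ha⟩
    intro hv'; exact hvZ (Finset.mem_inter.2 ⟨hv', hv⟩)
  by_cases h2 : (Z ∩ T).Nonempty ∧ Z ∩ T ≠ T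
  · obtain ⟨u, hu, v, hv, hvZ, ha⟩ := hT.2 (Z ∩ T) Finset.inter_subset_right h2.1 h2.2
    refine ⟨u, (Finset.mem_inter.1 hu).1, v, Finset.mem_union_right _ hv, ?_, ha⟩
    intro hv'; exact hvZ (Finset.mem_inter.2 ⟨hv', hv⟩)
  have e1 : (∀ x ∈ S, x ∉ Z) ∨ (∀ x ∈ S, x ∈ Z) := by
    by_cases hh : (Z ∩ S).Nonempty
    · right
      have : Z ∩ S = S := by by_contra hc; exact h1 ⟨hh, hc⟩
      intro x hx; rw [← this] at hx; exact (Finset.mem_inter.1 hx).1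
    · left
      intro x hx hxZ; exact hh ⟨x, Finset.mem_inter.2 ⟨hxZ, hx⟩⟩
  have e2 : (∀ x ∈ T, x ∉ Z) ∨ (∀ x ∈ T, x ∈ Z) := by
    by_cases hh : (Z ∩ T).Nonempty
    · right
      have : Z ∩ T = T := by by_contra hc; exact h2 ⟨hh, hc⟩
      intro x hx; rw [← this] at hx; exact (Finset.mem_inter.1 hx).1
    · left
      intro x hx hxZ; exact hh ⟨x, Finset.mem_inter.2 ⟨hxZ, hx⟩⟩
  rcases e1 with e1 | e1 <;> rcases e2 with e2 | e2
  · obtain ⟨z, hz⟩ := hne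
    rcases Finset.mem_union.1 (hZ hz) with h' | h'
    · exact absurd hz (e1 z h')
    · exact absurd hz (e2 z h')
  · rcases h with ⟨u, hu, v, hv, ha⟩ | ⟨x, hx, hx'⟩
    · exact ⟨v, e2 v hv, u, Finset.mem_union_left _ hu, e1 u hu, ha.symm⟩
    · exact absurd (e2 x hx') (e1 x hx)
  · rcases h with ⟨u, hu, v, hv, ha⟩ | ⟨x, hx, hx'⟩
    · exact ⟨u, e1 u hu, v, Finset.mem_union_right _ hv, e2 v hv, ha⟩
    · exact absurd (e1 x hx) (e2 x hx')
  · exfalso; apply hneq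
    apply Finset.Subset.antisymm hZ
    intro x hx
    rcases Finset.mem_union.1 hx with h' | h'
    · exact e1 x h'
    · exact e2 x h'

lemma conn_insert {S : Finset W} (hS : Conn H S) {u v : W} (hu : u ∈ S) (ha : H.Adj u v) :
    Conn H (insert v S) := by
  have := conn_union_aux hS (conn_singleton v) (Or.inl ⟨u, hu, v, by simp, ha⟩)
  rwa [Finset.union_comm, ← Finset.insert_eq] at this

/-- a closed nonempty subset of a connected set is everything -/
lemma conn_closed {S : Finset W} (hS : Conn H S) {Z : Finset W} (hZ : Z ⊆ S) (hne : Z.Nonempty)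
    (hcl : ∀ u ∈ Z, ∀ v ∈ S, H.Adj u v → v ∈ Z) : Z = S := by
  by_contra h
  obtain ⟨u, hu, v, hv, hvZ, ha⟩ := hS.2 Z hZ hne h
  exact hvZ (hcl u hu v hv ha)

lemma conn_induce {S : Finset W} (hS : Conn H S) : (H.induce (S : Set W)).Connected := by
  obtain ⟨s, hs⟩ := hS.1
  have : Nonempty (S : Set W) := ⟨⟨s, hs⟩⟩
  refine SimpleGraph.connected_iff_exists_forall_reachable _ |>.2 ⟨⟨s, hs⟩, ?_⟩
  have key : S.filter (fun t => ∃ h : t ∈ (S : Set W),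
      (H.induce (S : Set W)).Reachable ⟨s, hs⟩ ⟨t, h⟩) = S := by
    apply conn_closed hS (Finset.filter_subset _ _)
    · exact ⟨s, Finset.mem_filter.2 ⟨hs, hs, SimpleGraph.Reachable.refl _⟩⟩
    · intro u hu v hv ha
      obtain ⟨hu1, hu2, hr⟩ := Finset.mem_filter.1 hu
      refine Finset.mem_filter.2 ⟨hv, hv, hr.trans ?_⟩
      apply SimpleGraph.Adj.reachable
      simpa using ha
  rintro ⟨t, ht⟩
  have ht' : t ∈ S := ht
  rw [← key] at ht'
  exact (Finset.mem_filter.1 ht').2.2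

/-- component of `x` in `S` -/
lemma exists_comp {S : Finset W} {x : W} (hx : x ∈ S) : ∃ K ⊆ S, x ∈ K ∧ Conn H K ∧
    ∀ u ∈ K, ∀ v ∈ S, H.Adj u v → v ∈ K := by
  let F := S.powerset.filter (fun K => x ∈ K ∧ Conn H K)
  have hF : F.Nonempty := ⟨{x}, by simp [F, hx, conn_singleton]⟩
  obtain ⟨K, hK, hmax⟩ := Finset.exists_max_image F Finset.card hF
  simp only [F, Finset.mem_filter, Finset.mem_powerset] at hK hmax
  refine ⟨K, hK.1, hK.2.1, hK.2.2, ?_⟩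
  intro u hu v hv ha
  by_contra hvK
  have := hmax (insert v K) ⟨Finset.insert_subset hv hK.1, Finset.mem_insert_of_mem hK.2.1,
    conn_insert hK.2.2 hu ha⟩
  rw [Finset.card_insert_of_notMem hvK] at this
  omega

/-- two disjoint subsets of a connected set are adjacent or linked by a connected set -/
lemma link {S P Q : Finset W} (hS : Conn H S) (hP : P ⊆ S) (hQ : Q ⊆ S) (hPQ : Disjoint P Q)
    (hPn : P.Nonempty) (hQn : Q.Nonempty) :
    Tch H P Q ∨ ∃ K ⊆ S, Conn H K ∧ Disjoint K P ∧ Disjoint K Q ∧ Tch H K P ∧ Tch H K Q := by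
  by_contra hcon
  rw [not_or] at hcon
  obtain ⟨h1, h2⟩ := hcon
  let Z := S.filter (fun z => z ∈ P ∨ ∃ K ⊆ S, z ∈ K ∧ Conn H K ∧ Disjoint K P ∧ Disjoint K Q ∧
    Tch H K P)
  have hZ : Z = S := by
    apply conn_closed hS (Finset.filter_subset _ _)
    · obtain ⟨p, hp⟩ := hPn
      exact ⟨p, Finset.mem_filter.2 ⟨hP hp, Or.inl hp⟩⟩
    · intro u hu v hv ha
      obtain ⟨huS, hu⟩ := Finset.mem_filter.1 hu
      refine Finset.mem_filter.2 ⟨hv, ?_⟩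
      by_cases hvP : v ∈ P
      · exact Or.inl hvP
      right
      by_cases hvQ : v ∈ Q
      · exfalso
        rcases hu with hu | ⟨K, hKS, huK, hK, hKP, hKQ, hT⟩
        · exact h1 ⟨u, hu, v, hvQ, ha⟩
        · exact h2 ⟨K, hKS, hK, hKP, hKQ, hT, u, huK, v, hvQ, ha⟩
      rcases hu with hu | ⟨K, hKS, huK, hK, hKP, hKQ, hT⟩
      · exact ⟨{v}, by simpa using hv, by simp, conn_singleton v, by simpa using hvP,
          by simpa using hvQ, v, by simp, u, hu, ha.symm⟩
      · refine ⟨insert v K, Finset.insert_subset hv hKS, by simp, conn_insert hK huK ha, ?_, ?_,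
          hT.mono (Finset.subset_insert _ _) (Finset.Subset.refl _)⟩
        · exact Finset.disjoint_insert_left.2 ⟨hvP, hKP⟩
        · exact Finset.disjoint_insert_left.2 ⟨hvQ, hKQ⟩
  obtain ⟨q, hq⟩ := hQn
  have hqZ : q ∈ Z := hZ ▸ hQ hq
  rcases (Finset.mem_filter.1 hqZ).2 with h | ⟨K, _, hqK, _, _, hKQ, _⟩
  · exact Finset.disjoint_left.1 hPQ h hq
  · exact Finset.disjoint_left.1 hKQ hqK hq

lemma mk_K33 {A B : Fin 3 → Finset W} (hA : ∀ i, Conn H (A i)) (hB : ∀ i, Conn H (B i))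
    (hAA : ∀ i j, i ≠ j → Disjoint (A i) (A j)) (hBB : ∀ i j, i ≠ j → Disjoint (B i) (B j))
    (hAB : ∀ i j, Disjoint (A i) (B j)) (hT : ∀ i j, Tch H (A i) (B j)) :
    HasMinor H (completeBipartiteGraph (Fin 3) (Fin 3)) := by
  refine ⟨Sum.elim (fun i => (A i : Set W)) (fun i => (B i : Set W)), ?_, ?_, ?_⟩
  · rintro (i | i)
    · exact conn_induce (hA i)
    · exact conn_induce (hB i)
  · rintro (i | i) (j | j) hij
    · exact Finset.disjoint_coe.2 (hAA i j (by simpa using hij))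
    · exact Finset.disjoint_coe.2 (hAB i j)
    · exact Finset.disjoint_coe.2 (hAB j i).symm
    · exact Finset.disjoint_coe.2 (hBB i j (by simpa using hij))
  · rintro (i | i) (j | j) hij
    · simp at hij
    · obtain ⟨u, hu, v, hv, h⟩ := hT i j
      exact ⟨u, hu, v, hv, h⟩
    · obtain ⟨u, hu, v, hv, h⟩ := (hT j i).symm
      exact ⟨u, hu, v, hv, h⟩
    · simp at hij

lemma mk_K5 {A : Fin 5 → Finset W} (hA : ∀ i, Conn H (A i))
    (hAA : ∀ i j, i < j → Disjoint (A i) (A j)) (hT : ∀ i j, i < j → Tch H (A i) (A j)) :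
    HasMinor H (completeGraph (Fin 5)) := by
  refine ⟨fun i => (A i : Set W), fun i => conn_induce (hA i), ?_, ?_⟩
  · intro i j hij
    rcases lt_or_gt_of_ne hij with h | h
    · exact Finset.disjoint_coe.2 (hAA i j h)
    · exact (Finset.disjoint_coe.2 (hAA j i h)).symm
  · intro i j hij
    have hij : i ≠ j := by simpa using hij
    rcases lt_or_gt_of_ne hij with h | h
    · obtain ⟨u, hu, v, hv, h⟩ := hT i j h
      exact ⟨u, hu, v, hv, h⟩
    · obtain ⟨u, hu, v, hv, h⟩ := (hT j i h).symm
      exact ⟨u, hu, v, hv, h⟩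

variable (H) in
/-- edges inside `S` -/
noncomputable def eIn (S : Finset W) : Finset (Sym2 W) :=
  H.edgeFinset.filter (fun e => ∀ v ∈ e, v ∈ S)

lemma inc_count {S : Finset W} {u : W} (hu : u ∈ S) :
    ((eIn H S).filter (fun e => u ∈ e)).card = (S.filter (H.Adj u)).card := by
  symm
  apply Finset.card_bij (fun y _ => s(u, y))
  · intro y hy
    obtain ⟨h1, h2⟩ := Finset.mem_filter.1 hy
    simp only [eIn, Finset.mem_filter, SimpleGraph.mem_edgeFinset, SimpleGraph.mem_edgeSet]
    refine ⟨⟨h2, ?_⟩, by simp⟩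
    intro v hv
    rcases Sym2.mem_iff.1 hv with rfl | rfl <;> assumption
  · intro y hy z hz h
    exact Sym2.congr_right.1 h
  · intro e he
    simp only [eIn, Finset.mem_filter, SimpleGraph.mem_edgeFinset] at he
    obtain ⟨⟨h1, h2⟩, h3⟩ := he
    obtain ⟨y, rfl⟩ := h3
    exact ⟨y, Finset.mem_filter.2 ⟨h2 y (by simp), h1⟩, rfl⟩

lemma mem_card {S : Finset W} {e : Sym2 W} (he : e ∈ eIn H S) :
    (S.filter (fun u => u ∈ e)).card = 2 := by
  simp only [eIn, Finset.mem_filter, SimpleGraph.mem_edgeFinset] at he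
  induction e using Sym2.ind with
  | _ x y =>
    have hxy : x ≠ y := H.ne_of_adj he.1
    rw [← Finset.card_pair hxy]
    congr 1
    ext z
    simp only [Finset.mem_filter, Sym2.mem_iff, Finset.mem_insert, Finset.mem_singleton]
    constructor
    · exact fun h => h.2
    · intro h
      exact ⟨he.2 z (by simpa using h), h⟩

lemma handshake (S : Finset W) :
    ∑ u ∈ S, (S.filter (H.Adj u)).card = 2 * (eIn H S).card := by
  have h1 : ∑ u ∈ S, (S.filter (H.Adj u)).card
      = ∑ u ∈ S, ((eIn H S).filter (fun e => u ∈ e)).card :=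
    Finset.sum_congr rfl (fun u hu => (inc_count hu).symm)
  have h2 : ∑ e ∈ eIn H S, (S.filter (fun u => u ∈ e)).card = 2 * (eIn H S).card := by
    rw [Finset.sum_congr rfl (fun e he => mem_card he)]
    simp [mul_comm]
  rw [h1, ← h2]
  simp only [Finset.card_filter]
  exact Finset.sum_comm

lemma conn_edges {S : Finset W} (hS : Conn H S) : S.card ≤ (eIn H S).card + 1 := by
  let F := S.powerset.filter (fun Z => Z.Nonempty ∧ Z.card ≤ (eIn H Z).card + 1)
  obtain ⟨s, hs⟩ := hS.1
  have hF : F.Nonempty := ⟨{s}, by simp [F, hs]⟩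
  obtain ⟨Z, hZ, hmax⟩ := Finset.exists_max_image F Finset.card hF
  simp only [F, Finset.mem_filter, Finset.mem_powerset] at hZ hmax
  by_cases h : Z = S
  · rw [← h]; exact hZ.2.2
  exfalso
  obtain ⟨u, hu, v, hv, hvZ, ha⟩ := hS.2 Z hZ.1 hZ.2.1 h
  have hsub : insert s(u, v) (eIn H Z) ⊆ eIn H (insert v Z) := by
    intro e he
    rcases Finset.mem_insert.1 he with rfl | he
    · simp [eIn, ha, hu]
    · simp only [eIn, Finset.mem_filter] at he ⊢
      exact ⟨he.1, fun w hw => Finset.mem_insert_of_mem (he.2 w hw)⟩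
  have hnot : s(u, v) ∉ eIn H Z := by
    simp [eIn, hvZ]
  have hc := Finset.card_le_card hsub
  rw [Finset.card_insert_of_notMem hnot] at hc
  have := hmax (insert v Z) ⟨Finset.insert_subset hv hZ.1, by simp, by
    rw [Finset.card_insert_of_notMem hvZ]; omega⟩
  rw [Finset.card_insert_of_notMem hvZ] at this
  omega

variable (H) in
/-- an induced cycle -/
def Cyc (C : Finset W) : Prop := Conn H C ∧ ∀ x ∈ C, (C.filter (H.Adj x)).card = 2

lemma IsFace.cyc {C : Finset W} (h : IsFace H C) : Cyc H C := ⟨h.1, h.2.2⟩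

lemma two_nbrs {C : Finset W} (hC : Cyc H C) {x p q : W} (hx : x ∈ C) (hp : p ∈ C) (hq : q ∈ C)
    (hpq : p ≠ q) (h1 : H.Adj x p) (h2 : H.Adj x q) {y : W} (hy : y ∈ C) (h : H.Adj x y) :
    y = p ∨ y = q := by
  have h3 := hC.2 x hx
  have hsub : ({p, q} : Finset W) ⊆ C.filter (H.Adj x) := by
    intro z hz
    rcases Finset.mem_insert.1 hz with rfl | hz
    · simp [hp, h1]
    · rw [Finset.mem_singleton.1 hz]; simp [hq, h2]
  have := Finset.eq_of_subset_of_card_le hsub (by rw [h3, Finset.card_pair hpq])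
  have hy' : y ∈ C.filter (H.Adj x) := by simp [hy, h]
  rw [← this] at hy'
  simpa using hy'

lemma other_nbr {C : Finset W} (hC : Cyc H C) {x y : W} (hx : x ∈ C) :
    ∃ z ∈ C, z ≠ y ∧ H.Adj x z := by
  have h3 := hC.2 x hx
  obtain ⟨z, hz, hzy⟩ := Finset.exists_mem_ne (by omega : 1 < (C.filter (H.Adj x)).card) y
  exact ⟨z, (Finset.mem_filter.1 hz).1, hzy, (Finset.mem_filter.1 hz).2⟩

lemma cyc_comp {C : Finset W} (hC : Cyc H C) {a b : W} (ha : a ∈ C) (hb : b ∈ C) (hab : a ≠ b)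
    {K : Finset W} (hK : Conn H K) (hKC : K ⊆ C) (haK : a ∉ K) (hbK : b ∉ K)
    (hcl : ∀ u ∈ K, ∀ v ∈ C, v ≠ a → v ≠ b → H.Adj u v → v ∈ K) :
    (K.filter (H.Adj a)).card = 1 ∧ (K.filter (H.Adj b)).card = 1 := by
  have e1 : ∀ k ∈ K, (C.filter (H.Adj k)).card
      = (K.filter (H.Adj k)).card + ((if H.Adj a k then 1 else 0) + (if H.Adj b k then 1 else 0)) := by
    intro k hk
    have hs : C.filter (H.Adj k) = K.filter (H.Adj k) ∪ ({a, b} : Finset W).filter (H.Adj k) := by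
      ext z
      simp only [Finset.mem_filter, Finset.mem_union, Finset.mem_insert, Finset.mem_singleton]
      constructor
      · rintro ⟨hz, h⟩
        by_cases hza : z = a
        · exact Or.inr ⟨Or.inl hza, h⟩
        by_cases hzb : z = b
        · exact Or.inr ⟨Or.inr hzb, h⟩
        exact Or.inl ⟨hcl k hk z hz hza hzb h, h⟩
      · rintro (⟨hz, h⟩ | ⟨rfl | rfl, h⟩)
        · exact ⟨hKC hz, h⟩
        · exact ⟨ha, h⟩
        · exact ⟨hb, h⟩
    rw [hs, Finset.card_union_of_disjoint]
    · congr 1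
      rw [Finset.card_filter, Finset.sum_pair hab]
      simp only [H.adj_comm k]
    · rw [Finset.disjoint_left]
      intro z hz hz'
      simp only [Finset.mem_filter, Finset.mem_insert, Finset.mem_singleton] at hz hz'
      rcases hz'.1 with rfl | rfl
      · exact haK hz.1
      · exact hbK hz.1
  have e2 : ∑ k ∈ K, (C.filter (H.Adj k)).card = 2 * K.card := by
    rw [Finset.sum_congr rfl (fun k hk => hC.2 k (hKC hk))]
    simp [mul_comm]
  rw [Finset.sum_congr rfl e1, Finset.sum_add_distrib, Finset.sum_add_distrib, handshake,
    ← Finset.card_filter, ← Finset.card_filter] at e2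
  replace e2 : 2 * (eIn H K).card + ((K.filter (H.Adj a)).card + (K.filter (H.Adj b)).card)
      = 2 * K.card := e2
  have e3 := conn_edges hK
  have a2 : (K.filter (H.Adj a)).card ≤ 2 := by
    rw [← hC.2 a ha]; exact Finset.card_le_card (Finset.filter_subset_filter _ hKC)
  have key : ∀ a b : W, a ∈ C → b ∈ C → a ≠ b → a ∉ K → b ∉ K →
      (∀ u ∈ K, ∀ v ∈ C, v ≠ a → v ≠ b → H.Adj u v → v ∈ K) →
      (K.filter (H.Adj a)).card = 2 → (K.filter (H.Adj b)).card = 0 → False := by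
    intro a b ha hb hab haK hbK hcl h1 h2
    have hsub : K.filter (H.Adj a) = C.filter (H.Adj a) :=
      Finset.eq_of_subset_of_card_le (Finset.filter_subset_filter _ hKC) (by
        rw [h1, hC.2 a ha])
    have h2' : ∀ k ∈ K, ¬ H.Adj b k := by
      rw [Finset.card_eq_zero, Finset.filter_eq_empty_iff] at h2
      exact fun k hk => h2 hk
    have : insert a K = C := by
      apply conn_closed hC.1 (Finset.insert_subset ha hKC) (by simp)
      intro u hu v hv huv
      rcases Finset.mem_insert.1 hu with rfl | hu
      · have : v ∈ C.filter (H.Adj u) := by simp [hv, huv]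
        rw [← hsub] at this
        exact Finset.mem_insert_of_mem (Finset.mem_filter.1 this).1
      · by_cases hva : v = a
        · simp [hva]
        by_cases hvb : v = b
        · subst hvb; exact absurd huv.symm (h2' u hu)
        exact Finset.mem_insert_of_mem (hcl u hu v hv hva hvb huv)
    rw [← this] at hb
    rcases Finset.mem_insert.1 hb with h | h
    · exact hab h.symm
    · exact hbK h
  have k1 := key a b ha hb hab haK hbK hcl
  have k2 := key b a hb ha hab.symm hbK haK (fun u hu v hv h1 h2 => hcl u hu v hv h2 h1)
  have k3 : ¬ ((K.filter (H.Adj a)).card = 0 ∧ (K.filter (H.Adj b)).card = 0) := by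
    rintro ⟨h1, h2⟩
    rw [Finset.card_eq_zero, Finset.filter_eq_empty_iff] at h1 h2
    have : K = C := by
      apply conn_closed hC.1 hKC hK.1
      intro u hu v hv huv
      apply hcl u hu v hv _ _ huv
      · rintro rfl; exact h1 hu huv.symm
      · rintro rfl; exact h2 hu huv.symm
    exact haK (this ▸ ha)
  have k1' : ¬ ((K.filter (H.Adj a)).card = 2 ∧ (K.filter (H.Adj b)).card = 0) :=
    fun h => k1 h.1 h.2
  have k2' : ¬ ((K.filter (H.Adj b)).card = 2 ∧ (K.filter (H.Adj a)).card = 0) :=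
    fun h => k2 h.1 h.2
  clear k1 k2 key
  have hpar : (K.filter (H.Adj a)).card + (K.filter (H.Adj b)).card ≤ 2 := by omega
  omega

/-- removing two adjacent vertices from a cycle leaves a connected set -/
lemma cyc_adj {C : Finset W} (hC : Cyc H C) {a b : W} (ha : a ∈ C) (hb : b ∈ C)
    (hab : H.Adj a b) : Conn H ((C.erase a).erase b) := by
  have hne := H.ne_of_adj hab
  obtain ⟨p, hp, hpb, hap⟩ := other_nbr hC (y := b) ha
  have hpS : p ∈ (C.erase a).erase b := by
    simp [hp, hpb, (H.ne_of_adj hap).symm]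
  obtain ⟨K, hKS, hpK, hK, hcl⟩ := exists_comp (H := H) hpS
  have hKC : K ⊆ C := fun x hx => Finset.mem_of_mem_erase (Finset.mem_of_mem_erase (hKS hx))
  have haK : a ∉ K := fun h => by have := hKS h; simp at this
  have hbK : b ∉ K := fun h => by have := hKS h; simp at this
  obtain ⟨h1, h2⟩ := cyc_comp hC ha hb hne hK hKC haK hbK
    (fun u hu v hv h1 h2 h => hcl u hu v (by simp [h1, h2, hv]) h)
  obtain ⟨q, hq⟩ : (K.filter (H.Adj b)).Nonempty := Finset.card_pos.1 (by omega)
  obtain ⟨hqK, hbq⟩ := Finset.mem_filter.1 hq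
  have : insert a (insert b K) = C := by
    apply conn_closed hC.1 _ (by simp)
    · intro u hu v hv huv
      simp only [Finset.mem_insert] at hu ⊢
      rcases hu with rfl | rfl | hu
      · rcases two_nbrs hC ha hp hb hpb hap hab hv huv with rfl | rfl <;> simp [hpK]
      · rcases two_nbrs hC hb (hKC hqK) ha (by rintro rfl; exact haK hqK) hbq hab.symm hv huv
          with rfl | rfl <;> simp [hqK]
      · by_cases hva : v = a
        · simp [hva]
        by_cases hvb : v = b
        · simp [hvb]
        exact Or.inr (Or.inr (hcl u hu v (by simp [hva, hvb, hv]) huv))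
    · exact Finset.insert_subset ha (Finset.insert_subset hb hKC)
  have hE : (C.erase a).erase b = K := by
    rw [← this]
    ext z
    simp only [Finset.mem_erase, Finset.mem_insert]
    constructor
    · rintro ⟨h1, h2, h3⟩; tauto
    · intro hz
      exact ⟨fun h => hbK (h ▸ hz), fun h => haK (h ▸ hz), Or.inr (Or.inr hz)⟩
  rw [hE]; exact hK

/-- removing two nonadjacent vertices from a cycle leaves two arcs -/
lemma cyc_nonadj {C : Finset W} (hC : Cyc H C) {a b x : W} (ha : a ∈ C) (hb : b ∈ C) (hne : a ≠ b)
    (hab : ¬ H.Adj a b) (hx : x ∈ C) (hxa : x ≠ a) (hxb : x ≠ b) :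
    ∃ A A' : Finset W, Conn H A ∧ Conn H A' ∧ Disjoint A A' ∧ x ∈ A' ∧
      a ∉ A ∧ a ∉ A' ∧ b ∉ A ∧ b ∉ A' ∧ insert a (insert b (A ∪ A')) = C ∧
      (∃ u ∈ A, H.Adj a u) ∧ (∃ u ∈ A, H.Adj b u) ∧ (∃ u ∈ A', H.Adj a u) ∧
      (∃ u ∈ A', H.Adj b u) ∧ ¬ Tch H A A' := by
  have comp : ∀ y ∈ C, y ≠ a → y ≠ b → ∃ K ⊆ C, y ∈ K ∧ Conn H K ∧ a ∉ K ∧ b ∉ K ∧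
      (∀ u ∈ K, ∀ v ∈ C, v ≠ a → v ≠ b → H.Adj u v → v ∈ K) ∧
      (K.filter (H.Adj a)).card = 1 ∧ (K.filter (H.Adj b)).card = 1 := by
    intro y hy hya hyb
    have hyS : y ∈ (C.erase a).erase b := by simp [hy, hya, hyb]
    obtain ⟨K, hKS, hpK, hK, hcl⟩ := exists_comp (H := H) hyS
    have hKC : K ⊆ C := fun x hx => Finset.mem_of_mem_erase (Finset.mem_of_mem_erase (hKS hx))
    have haK : a ∉ K := fun h => by have := hKS h; simp at this
    have hbK : b ∉ K := fun h => by have := hKS h; simp at this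
    have hcl' : ∀ u ∈ K, ∀ v ∈ C, v ≠ a → v ≠ b → H.Adj u v → v ∈ K :=
      fun u hu v hv h1 h2 h => hcl u hu v (by simp [h1, h2, hv]) h
    exact ⟨K, hKC, hpK, hK, haK, hbK, hcl', cyc_comp hC ha hb hne hK hKC haK hbK hcl'⟩
  obtain ⟨A', hA'C, hxA', hA', haA', hbA', hclA', h1', h2'⟩ := comp x hx hxa hxb
  obtain ⟨p', hp'⟩ : (A'.filter (H.Adj a)).Nonempty := Finset.card_pos.1 (by omega)
  obtain ⟨q', hq'⟩ : (A'.filter (H.Adj b)).Nonempty := Finset.card_pos.1 (by omega)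
  obtain ⟨hp'A, hap'⟩ := Finset.mem_filter.1 hp'
  obtain ⟨hq'A, hbq'⟩ := Finset.mem_filter.1 hq'
  obtain ⟨p, hp, hpp', hap⟩ := other_nbr hC (y := p') ha
  have hpA' : p ∉ A' := by
    intro h
    have := Finset.card_le_one.1 h1'.le p (by simp [h, hap]) p' hp'
    exact hpp' this
  have hpb : p ≠ b := by rintro rfl; exact hab hap
  obtain ⟨A, hAC, hpA, hA, haA, hbA, hclA, h1, h2⟩ := comp p hp (H.ne_of_adj hap).symm hpb
  obtain ⟨q, hq⟩ : (A.filter (H.Adj b)).Nonempty := Finset.card_pos.1 (by omega)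
  obtain ⟨hqA, hbq⟩ := Finset.mem_filter.1 hq
  have hdis : Disjoint A A' := by
    by_contra hnd
    obtain ⟨z, hz, hz'⟩ := Finset.not_disjoint_iff.1 hnd
    have : A ∩ A' = A := by
      apply conn_closed hA Finset.inter_subset_left ⟨z, by simp [hz, hz']⟩
      intro u hu v hv huv
      simp only [Finset.mem_inter] at hu ⊢
      exact ⟨hv, hclA' u hu.2 v (hAC hv) (fun h => haA (h ▸ hv)) (fun h => hbA (h ▸ hv)) huv⟩
    rw [← this] at hpA
    exact hpA' (Finset.mem_inter.1 hpA).2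
  have hqq' : q ≠ q' := by
    rintro rfl; exact Finset.disjoint_left.1 hdis hqA hq'A
  refine ⟨A, A', hA, hA', hdis, hxA', haA, haA', hbA, hbA', ?_, ⟨p, hpA, hap⟩, ⟨q, hqA, hbq⟩,
    ⟨p', hp'A, hap'⟩, ⟨q', hq'A, hbq'⟩, ?_⟩
  · apply conn_closed hC.1 _ (by simp)
    · intro u hu v hv huv
      simp only [Finset.mem_insert, Finset.mem_union] at hu ⊢
      by_cases hva : v = a
      · simp [hva]
      by_cases hvb : v = b
      · simp [hvb]
      rcases hu with rfl | rfl | hu | hu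
      · rcases two_nbrs hC ha hp (hA'C hp'A) hpp' hap hap' hv huv with rfl | rfl <;> simp [hpA, hp'A]
      · rcases two_nbrs hC hb (hAC hqA) (hA'C hq'A) hqq' hbq hbq' hv huv
          with rfl | rfl <;> simp [hqA, hq'A]
      · exact Or.inr (Or.inr (Or.inl (hclA u hu v hv hva hvb huv)))
      · exact Or.inr (Or.inr (Or.inr (hclA' u hu v hv hva hvb huv)))
    · exact Finset.insert_subset ha (Finset.insert_subset hb (Finset.union_subset hAC hA'C))
  · rintro ⟨u, hu, v, hv, huv⟩
    have := hclA u hu v (hA'C hv) (fun h => haA' (h ▸ hv)) (fun h => hbA' (h ▸ hv)) huv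
    exact Finset.disjoint_left.1 hdis this hv

/-- a proper connected part of a cycle has at most two outer neighbours -/
lemma cyc_out3 {C : Finset W} (hC : Cyc H C) {K : Finset W} (hK : Conn H K) (hKC : K ⊆ C)
    {a b c : W} (ha : a ∈ C) (hb : b ∈ C) (hc : c ∈ C) (haK : a ∉ K) (hbK : b ∉ K) (hcK : c ∉ K)
    (hab : a ≠ b) (hac : a ≠ c) (hbc : b ≠ c) (h1 : ∃ u ∈ K, H.Adj u a) (h2 : ∃ u ∈ K, H.Adj u b)
    (h3 : ∃ u ∈ K, H.Adj u c) : False := by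
  have e1 : ∀ k ∈ K, (K.filter (H.Adj k)).card + ((C \ K).filter (H.Adj k)).card
      = (C.filter (H.Adj k)).card := by
    intro k hk
    rw [← Finset.card_union_of_disjoint, ← Finset.filter_union, Finset.union_sdiff_of_subset hKC]
    exact Finset.disjoint_filter_filter Finset.disjoint_sdiff
  have e2 : ∑ k ∈ K, (C.filter (H.Adj k)).card = 2 * K.card := by
    rw [Finset.sum_congr rfl (fun k hk => hC.2 k (hKC hk))]
    simp [mul_comm]
  rw [← Finset.sum_congr rfl e1, Finset.sum_add_distrib, handshake] at e2
  have e3 := conn_edges hK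
  have e4 : ∑ k ∈ K, ((C \ K).filter (H.Adj k)).card
      = ∑ c ∈ C \ K, (K.filter (fun k => H.Adj k c)).card := by
    simp only [Finset.card_filter]
    exact Finset.sum_comm
  have e5 : ∑ c ∈ ({a, b, c} : Finset W), (K.filter (fun k => H.Adj k c)).card
      ≤ ∑ c ∈ C \ K, (K.filter (fun k => H.Adj k c)).card := by
    apply Finset.sum_le_sum_of_subset
    intro z hz
    simp only [Finset.mem_insert, Finset.mem_singleton] at hz
    rcases hz with rfl | rfl | rfl <;> simp [*]
  have pos : ∀ d, (∃ u ∈ K, H.Adj u d) → 1 ≤ (K.filter (fun k => H.Adj k d)).card := by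
    rintro d ⟨u, hu, hd⟩
    exact Finset.card_pos.2 ⟨u, by simp [hu, hd]⟩
  rw [Finset.sum_insert (by simp [hab, hac]), Finset.sum_pair hbc] at e5
  have := pos a h1
  have := pos b h2
  have := pos c h3
  omega

lemma face_core {C1 C2 : Finset W} (h1 : IsFace H C1) (h2 : IsFace H C2)
    (hdeg : ∀ u, 4 ≤ (Finset.univ.filter (H.Adj u)).card)
    {a b x y : W} {Q : Finset W} (ha1 : a ∈ C1) (ha2 : a ∈ C2) (hb1 : b ∈ C1) (hb2 : b ∈ C2)
    (hab : a ≠ b) (hx1 : x ∈ C1) (hx2 : x ∈ C2) (hy1 : y ∈ C1) (hy2 : y ∈ C2) (hxy : H.Adj x y)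
    (hxa : x ≠ a) (hxb : x ≠ b) (hQ : Conn H Q) (hQ2 : Q ⊆ C2) (hQ1 : Disjoint Q C1)
    (hQa : ∃ u ∈ Q, H.Adj u a) (hQb : ∃ u ∈ Q, H.Adj u b)
    (hcl : ∀ u ∈ Q, ∀ v ∈ C2, v ∉ C1 → H.Adj u v → v ∈ Q) :
    HasMinor H (completeBipartiteGraph (Fin 3) (Fin 3)) := by
  have nQ : ∀ z ∈ C1, z ∉ Q := fun z hz hz' => Finset.disjoint_left.1 hQ1 hz' hz
  have hout : ∀ u ∈ Q, ∀ v ∈ C2, H.Adj u v → v ∈ Q ∨ v = a ∨ v = b := by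
    intro u hu v hv huv
    by_cases hv1 : v ∈ C1
    · right
      by_contra hcon
      rw [not_or] at hcon
      exact cyc_out3 h2.cyc hQ hQ2 ha2 hb2 hv (nQ a ha1) (nQ b hb1) (nQ v hv1) hab
        (Ne.symm hcon.1) (Ne.symm hcon.2) hQa hQb ⟨u, hu, huv⟩
    · exact Or.inl (hcl u hu v hv hv1 huv)
  have hnab : ¬ H.Adj a b := by
    intro had
    have hS := cyc_adj h2.cyc ha2 hb2 had
    have hQS : Q = (C2.erase a).erase b := by
      apply conn_closed hS
      · intro u hu
        simp only [Finset.mem_erase]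
        exact ⟨fun h => nQ b hb1 (h ▸ hu), fun h => nQ a ha1 (h ▸ hu), hQ2 hu⟩
      · exact hQ.1
      · intro u hu v hv huv
        simp only [Finset.mem_erase] at hv
        rcases hout u hu v hv.2.2 huv with h | h | h
        · exact h
        · exact absurd h hv.2.1
        · exact absurd h hv.1
    apply nQ x hx1
    rw [hQS]; simp [hxa, hxb, hx2]
  obtain ⟨A, A', hA, hA', hdis, hxA', haA, haA', hbA, hbA', hC1, ⟨p1, hp1, hap1⟩, ⟨p2, hp2, hbp2⟩,
    ⟨p3, hp3, hap3⟩, ⟨p4, hp4, hbp4⟩, hnT⟩ := cyc_nonadj h1.cyc ha1 hb1 hab hnab hx1 hxa hxb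
  have hAC : A ⊆ C1 := by
    rw [← hC1]; intro z hz; simp [hz]
  have hA'C : A' ⊆ C1 := by
    rw [← hC1]; intro z hz; simp [hz]
  have hAn : (A \ C2).Nonempty := by
    by_contra hcon
    rw [Finset.not_nonempty_iff_eq_empty, Finset.sdiff_eq_empty_iff_subset] at hcon
    have hT : insert a (insert b (Q ∪ A)) = C2 := by
      apply conn_closed h2.1 _ (by simp)
      · intro u hu v hv huv
        simp only [Finset.mem_insert, Finset.mem_union] at hu ⊢
        obtain ⟨qa, hqa, hqa'⟩ := hQa
        obtain ⟨qb, hqb, hqb'⟩ := hQb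
        rcases hu with rfl | rfl | hu | hu
        · rcases two_nbrs h2.cyc ha2 (hQ2 hqa) (hcon hp1)
            (by rintro rfl; exact nQ _ (hAC hp1) hqa) hqa'.symm hap1 hv huv
            with rfl | rfl <;> tauto
        · rcases two_nbrs h2.cyc hb2 (hQ2 hqb) (hcon hp2)
            (by rintro rfl; exact nQ _ (hAC hp2) hqb) hqb'.symm hbp2 hv huv
            with rfl | rfl <;> tauto
        · have := hout u hu v hv huv
          tauto
        · have hsub : C1.filter (H.Adj u) ⊆ C2.filter (H.Adj u) := by
            intro z hz
            obtain ⟨hz, huz⟩ := Finset.mem_filter.1 hz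
            refine Finset.mem_filter.2 ⟨?_, huz⟩
            rw [← hC1] at hz
            simp only [Finset.mem_insert, Finset.mem_union] at hz
            rcases hz with rfl | rfl | hz | hz
            · exact ha2
            · exact hb2
            · exact hcon hz
            · exact absurd ⟨u, hu, z, hz, huz⟩ hnT
          have heq := Finset.eq_of_subset_of_card_le hsub (by
            rw [h1.2.2 u (hAC hu), h2.2.2 u (hcon hu)])
          have hv' : v ∈ C2.filter (H.Adj u) := by simp [hv, huv]
          rw [← heq] at hv'
          have hv1 := (Finset.mem_filter.1 hv').1
          rw [← hC1] at hv1
          simp only [Finset.mem_insert, Finset.mem_union] at hv1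
          rcases hv1 with h | h | h | h
          · tauto
          · tauto
          · tauto
          · exact absurd ⟨u, hu, v, h, huv⟩ hnT
      · exact Finset.insert_subset ha2 (Finset.insert_subset hb2 (Finset.union_subset hQ2 hcon))
    rw [← hT] at hx2
    simp only [Finset.mem_insert, Finset.mem_union] at hx2
    rcases hx2 with h | h | h | h
    · exact hxa h
    · exact hxb h
    · exact nQ x hx1 h
    · exact Finset.disjoint_left.1 hdis h hxA'
  obtain ⟨p, hxp, hpC⟩ : ∃ p, H.Adj x p ∧ p ∉ C1 ∪ C2 := by
    by_contra hcon
    have hsub : Finset.univ.filter (H.Adj x) ⊆ C1.filter (H.Adj x) ∪ C2.filter (H.Adj x) := by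
      intro z hz
      have hxz := (Finset.mem_filter.1 hz).2
      by_contra hz'
      apply hcon
      refine ⟨z, hxz, fun h => hz' ?_⟩
      rw [← Finset.filter_union]
      simp only [Finset.mem_filter]
      exact ⟨h, hxz⟩
    have c1 := Finset.card_le_card hsub
    have c2 := Finset.card_union_add_card_inter (C1.filter (H.Adj x)) (C2.filter (H.Adj x))
    have c3 : 1 ≤ (C1.filter (H.Adj x) ∩ C2.filter (H.Adj x)).card :=
      Finset.card_pos.2 ⟨y, by simp [hy1, hy2, hxy]⟩
    have := hdeg x
    rw [h1.2.2 x hx1, h2.2.2 x hx2] at c2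
    omega
  simp only [Finset.mem_union, not_or] at hpC
  have hS : Conn H (insert x C2ᶜ) := conn_insert h2.2.1 (by simpa using hpC.2) hxp.symm
  obtain ⟨R, hR, hRC, hRA, hRA'⟩ : ∃ R, Conn H R ∧ (∀ z ∈ R, z ∉ C1 ∧ z ∉ C2) ∧ Tch H R A ∧
      Tch H R A' := by
    have hsub' : insert x (A' \ C2) ⊆ A' := Finset.insert_subset hxA' Finset.sdiff_subset
    rcases link hS (P := A \ C2) (Q := insert x (A' \ C2))
      (fun z hz => by simp only [Finset.mem_sdiff] at hz; simp [hz.2])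
      (fun z hz => by
        simp only [Finset.mem_insert, Finset.mem_sdiff] at hz
        rcases hz with h | h
        · simp [h]
        · simp [h.2])
      (Finset.disjoint_of_subset_left Finset.sdiff_subset
        (Finset.disjoint_of_subset_right hsub' hdis)) hAn (by simp) with h | ⟨K, hKS, hK, hKP, hKQ, t1, t2⟩
    · exact absurd (h.mono Finset.sdiff_subset hsub') hnT
    · refine ⟨K, hK, ?_, t1.mono (Finset.Subset.refl _) Finset.sdiff_subset,
        t2.mono (Finset.Subset.refl _) hsub'⟩
      intro z hz
      have hz2 : z ∉ C2 := by
        rcases Finset.mem_insert.1 (hKS hz) with h | h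
        · exfalso
          exact Finset.disjoint_left.1 hKQ hz (by simp [h])
        · simpa using h
      refine ⟨?_, hz2⟩
      intro hz1
      rw [← hC1] at hz1
      simp only [Finset.mem_insert, Finset.mem_union] at hz1
      rcases hz1 with rfl | rfl | h | h
      · exact hz2 ha2
      · exact hz2 hb2
      · exact Finset.disjoint_left.1 hKP hz (by simp [h, hz2])
      · exact Finset.disjoint_left.1 hKQ hz (by simp [h, hz2])
  have hRQ : Disjoint Q R := Finset.disjoint_left.2 (fun z hz hz' => (hRC z hz').2 (hQ2 hz))
  have hQ1' : Q ⊆ C1ᶜ := fun z hz => by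
    rw [Finset.mem_compl]; exact fun h => nQ z h hz
  obtain ⟨Q', hQ', hQQ', hQ'1, hQ'R, hT⟩ : ∃ Q', Conn H Q' ∧ Q ⊆ Q' ∧ Q' ⊆ C1ᶜ ∧ Disjoint Q' R ∧
      Tch H R Q' := by
    rcases link h1.2.1 hQ1' (fun z hz => by simpa using (hRC z hz).1) hRQ hQ.1 hR.1 with
      h | ⟨K, hKS, hK, hKP, hKQ, t1, t2⟩
    · exact ⟨Q, hQ, Finset.Subset.refl _, hQ1', hRQ, h.symm⟩
    · exact ⟨Q ∪ K, conn_union_aux hQ hK (Or.inl t1.symm), Finset.subset_union_left,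
        Finset.union_subset hQ1' hKS, Finset.disjoint_union_left.2 ⟨hRQ, hKQ⟩,
        t2.symm.mono (Finset.Subset.refl _) Finset.subset_union_right⟩
  have nQ' : ∀ z ∈ C1, z ∉ Q' := fun z hz hz' => by
    have := hQ'1 hz'; simp at this; exact this hz
  have nR : ∀ z ∈ C1, z ∉ R := fun z hz hz' => (hRC z hz').1 hz
  have dR : ∀ T ⊆ C1, Disjoint R T := fun T hT => Finset.disjoint_left.2
    (fun z hz hz' => nR z (hT hz') hz)
  have dQ : ∀ T ⊆ C1, Disjoint T Q' := fun T hT => Finset.disjoint_left.2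
    (fun z hz hz' => nQ' z (hT hz) hz')
  have sa : ({a} : Finset W) ⊆ C1 := by simpa using ha1
  have sb : ({b} : Finset W) ⊆ C1 := by simpa using hb1
  apply mk_K33 (A := ![{a}, {b}, R]) (B := ![A, A', Q'])
  · simp [Fin.forall_fin_succ, conn_singleton, hR]
  · simp [Fin.forall_fin_succ, hA, hA', hQ']
  · have := dR _ sa
    have := dR _ sb
    intro i j hij
    fin_cases i <;> fin_cases j <;> first | exact absurd rfl hij | skip
    · simpa using hab
    · exact (dR _ sa).symm
    · simpa using hab.symm
    · exact (dR _ sb).symm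
    · exact dR _ sa
    · exact dR _ sb
  · intro i j hij
    fin_cases i <;> fin_cases j <;> first | exact absurd rfl hij | skip
    · exact hdis
    · exact dQ _ hAC
    · exact hdis.symm
    · exact dQ _ hA'C
    · exact (dQ _ hAC).symm
    · exact (dQ _ hA'C).symm
  · intro i j
    fin_cases i <;> fin_cases j
    · simpa using haA
    · simpa using haA'
    · exact dQ _ sa
    · simpa using hbA
    · simpa using hbA'
    · exact dQ _ sb
    · exact dR _ hAC
    · exact dR _ hA'C
    · exact hQ'R.symm
  · obtain ⟨qa, hqa, hqa'⟩ := hQa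
    obtain ⟨qb, hqb, hqb'⟩ := hQb
    intro i j
    fin_cases i <;> fin_cases j
    · exact ⟨a, by simp, p1, hp1, hap1⟩
    · exact ⟨a, by simp, p3, hp3, hap3⟩
    · exact ⟨a, by simp, qa, hQQ' hqa, hqa'.symm⟩
    · exact ⟨b, by simp, p2, hp2, hbp2⟩
    · exact ⟨b, by simp, p4, hp4, hbp4⟩
    · exact ⟨b, by simp, qb, hQQ' hqb, hqb'.symm⟩
    · exact hRA
    · exact hRA'
    · exact hT

lemma face_inter {C1 C2 : Finset W} (h1 : IsFace H C1) (h2 : IsFace H C2) (hne : C1 ≠ C2)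
    (hdeg : ∀ u, 4 ≤ (Finset.univ.filter (H.Adj u)).card)
    (hK : ¬ HasMinor H (completeBipartiteGraph (Fin 3) (Fin 3)))
    {x y z : W} (hx1 : x ∈ C1) (hx2 : x ∈ C2) (hy1 : y ∈ C1) (hy2 : y ∈ C2) (hxy : H.Adj x y)
    (hz1 : z ∈ C1) (hz2 : z ∈ C2) : z = x ∨ z = y := by
  by_contra hcon
  rw [not_or] at hcon
  obtain ⟨hzx, hzy⟩ := hcon
  obtain ⟨q, hq2, hq1⟩ : ∃ q ∈ C2, q ∉ C1 := by
    by_contra hcon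
    have hsub : C2 ⊆ C1 := by
      intro q hq; by_contra h; exact hcon ⟨q, hq, h⟩
    apply hne; symm
    apply conn_closed h1.1 hsub h2.1.1
    intro u hu v hv huv
    have heq : C2.filter (H.Adj u) = C1.filter (H.Adj u) :=
      Finset.eq_of_subset_of_card_le (Finset.filter_subset_filter _ hsub) (by
        rw [h1.2.2 u (hsub hu), h2.2.2 u hu])
    have hv' : v ∈ C1.filter (H.Adj u) := by simp [hv, huv]
    rw [← heq] at hv'
    exact (Finset.mem_filter.1 hv').1
  obtain ⟨Q, hQS, hqQ, hQ, hcl0⟩ := exists_comp (H := H) (S := C2 \ C1) (x := q) (by simp [hq1, hq2])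
  have hQ2 : Q ⊆ C2 := fun u hu => (Finset.mem_sdiff.1 (hQS hu)).1
  have nQ : ∀ z ∈ C1, z ∉ Q := fun u hu hu' => (Finset.mem_sdiff.1 (hQS hu')).2 hu
  have hQ1 : Disjoint Q C1 := Finset.disjoint_left.2 (fun u hu hu' => nQ u hu' hu)
  have hcl : ∀ u ∈ Q, ∀ v ∈ C2, v ∉ C1 → H.Adj u v → v ∈ Q :=
    fun u hu v hv hv1 huv => hcl0 u hu v (by simp [hv, hv1]) huv
  have hxyne := H.ne_of_adj hxy
  obtain ⟨a, ha1, ha2, hax, hay, hQa⟩ : ∃ a ∈ C1, a ∈ C2 ∧ a ≠ x ∧ a ≠ y ∧ ∃ u ∈ Q, H.Adj u a := by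
    by_contra hcon
    have hS := cyc_adj h2.cyc hx2 hy2 hxy
    have hQS : Q = (C2.erase x).erase y := by
      apply conn_closed hS
      · intro u hu
        simp only [Finset.mem_erase]
        exact ⟨fun h => nQ y hy1 (h ▸ hu), fun h => nQ x hx1 (h ▸ hu), hQ2 hu⟩
      · exact hQ.1
      · intro u hu v hv huv
        simp only [Finset.mem_erase] at hv
        by_cases hv1 : v ∈ C1
        · exact absurd ⟨v, hv1, hv.2.2, hv.2.1, hv.1, u, hu, huv⟩ hcon
        · exact hcl u hu v hv.2.2 hv1 huv
    apply nQ z hz1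
    rw [hQS]; simp [hzx, hzy, hz2]
  obtain ⟨b, hb1, hb2, hba, hQb⟩ : ∃ b ∈ C1, b ∈ C2 ∧ b ≠ a ∧ ∃ u ∈ Q, H.Adj u b := by
    by_contra hcon
    have := cyc_comp h2.cyc ha2 hx2 hax hQ hQ2 (nQ a ha1) (nQ x hx1) (by
      intro u hu v hv hva hvx huv
      by_cases hv1 : v ∈ C1
      · exact absurd ⟨v, hv1, hv, hva, u, hu, huv⟩ hcon
      · exact hcl u hu v hv hv1 huv)
    obtain ⟨w, hw⟩ : (Q.filter (H.Adj x)).Nonempty := Finset.card_pos.1 (by omega)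
    obtain ⟨hwQ, hxw⟩ := Finset.mem_filter.1 hw
    exact hcon ⟨x, hx1, hx2, hax.symm, w, hwQ, hxw.symm⟩
  by_cases hxb : x = b
  · exact hK (face_core h1 h2 hdeg ha1 ha2 hb1 hb2 hba.symm hy1 hy2 hx1 hx2 hxy.symm hay.symm
      (by rintro rfl; exact hxyne hxb) hQ hQ2 hQ1 hQa hQb hcl)
  · exact hK (face_core h1 h2 hdeg ha1 ha2 hb1 hb2 hba.symm hx1 hx2 hy1 hy2 hxy hax.symm
      hxb hQ hQ2 hQ1 hQa hQb hcl)

lemma face_three {C : Fin 3 → Finset W} (hC : ∀ i, IsFace H (C i)) (hinj : Function.Injective C)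
    (hdeg : ∀ u, 4 ≤ (Finset.univ.filter (H.Adj u)).card)
    (hK33 : ¬ HasMinor H (completeBipartiteGraph (Fin 3) (Fin 3)))
    (hK5 : ¬ HasMinor H (completeGraph (Fin 5)))
    {x y : W} (hx : ∀ i, x ∈ C i) (hy : ∀ i, y ∈ C i) (hxy : H.Adj x y) : False := by
  have hne := H.ne_of_adj hxy
  obtain ⟨P, hPdef⟩ : ∃ P : Fin 3 → Finset W, ∀ i, P i = ((C i).erase x).erase y := ⟨_, fun _ => rfl⟩
  have memP : ∀ i z, z ∈ P i ↔ z ≠ y ∧ z ≠ x ∧ z ∈ C i := by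
    intro i z; rw [hPdef]; simp
  have hP : ∀ i, Conn H (P i) := fun i => by rw [hPdef]; exact cyc_adj (hC i).cyc (hx i) (hy i) hxy
  have disC : ∀ i j, i ≠ j → ∀ z ∈ P i, z ∉ C j := by
    intro i j hij z hz hz'
    rw [memP] at hz
    rcases face_inter (hC i) (hC j) (fun h => hij (hinj h)) hdeg hK33 (hx i) (hx j) (hy i) (hy j)
      hxy hz.2.2 hz' with h | h
    · exact hz.2.1 h
    · exact hz.1 h
  have disP : ∀ i j, i ≠ j → Disjoint (P i) (P j) := by
    intro i j hij
    exact Finset.disjoint_left.2 (fun z hz hz' => disC i j hij z hz ((memP j z).1 hz').2.2)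
  have tx : ∀ i, Tch H {x} (P i) := by
    intro i
    obtain ⟨z, hz, hzy, hxz⟩ := other_nbr (hC i).cyc (y := y) (hx i)
    exact ⟨x, by simp, z, (memP i z).2 ⟨hzy, (H.ne_of_adj hxz).symm, hz⟩, hxz⟩
  have ty : ∀ i, Tch H {y} (P i) := by
    intro i
    obtain ⟨z, hz, hzy, hxz⟩ := other_nbr (hC i).cyc (y := x) (hy i)
    exact ⟨y, by simp, z, (memP i z).2 ⟨(H.ne_of_adj hxz).symm, hzy, hz⟩, hxz⟩
  have dx : ∀ i, Disjoint {x} (P i) := fun i => by simp [memP]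
  have dy : ∀ i, Disjoint {y} (P i) := fun i => by simp [memP]
  have nocom : ∀ K, Conn H K → (∀ z ∈ K, ∀ l, z ∉ C l) → (∀ i, Tch H K (P i)) → False := by
    intro K hK hKC hT
    have dKx : Disjoint {x} K := by
      rw [Finset.disjoint_singleton_left]; exact fun h => hKC x h 0 (hx 0)
    have dKy : Disjoint {y} K := by
      rw [Finset.disjoint_singleton_left]; exact fun h => hKC y h 0 (hy 0)
    have dKP : ∀ i, Disjoint K (P i) := fun i => Finset.disjoint_left.2
      (fun z hz hz' => hKC z hz i ((memP i z).1 hz').2.2)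
    apply hK33
    apply mk_K33 (A := ![{x}, {y}, K]) (B := P)
    · simp [Fin.forall_fin_succ, conn_singleton, hK]
    · exact hP
    · intro i j hij
      fin_cases i <;> fin_cases j <;> first | exact absurd rfl hij | skip
      · simpa using hne
      · exact dKx
      · simpa using hne.symm
      · exact dKy
      · exact dKx.symm
      · exact dKy.symm
    · exact disP
    · intro i j
      fin_cases i
      · exact dx j
      · exact dy j
      · exact dKP j
    · intro i j
      fin_cases i
      · exact tx j
      · exact ty j
      · exact hT j
  have lk : ∀ i j k : Fin 3, i ≠ j → i ≠ k → j ≠ k → (∀ l, l = i ∨ l = j ∨ l = k) →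
      ∃ E : Finset W, (∀ z ∈ E, ∀ l, z ∉ C l) ∧ Conn H (P i ∪ E) ∧ Tch H (P i ∪ E) (P j) ∧
        (E = ∅ ∨ (Conn H E ∧ Tch H E (P i) ∧ Tch H E (P j))) := by
    intro i j k hij hik hjk hall
    rcases link (hC k).2.1 (P := P i) (Q := P j)
      (fun z hz => by rw [Finset.mem_compl]; exact disC i k hik z hz)
      (fun z hz => by rw [Finset.mem_compl]; exact disC j k hjk z hz) (disP i j hij) (hP i).1 (hP j).1
      with h | ⟨K, hKS, hK, hKP, hKQ, t1, t2⟩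
    · exact ⟨∅, by simp, by simpa using hP i, by simpa using h, Or.inl rfl⟩
    · refine ⟨K, ?_, conn_union_aux (hP i) hK (Or.inl t1.symm),
        t2.mono Finset.subset_union_right (Finset.Subset.refl _), Or.inr ⟨hK, t1, t2⟩⟩
      intro z hz l hzl
      have hzk : z ∉ C k := Finset.mem_compl.1 (hKS hz)
      have hzx : z ≠ x := by rintro rfl; exact hzk (hx k)
      have hzy : z ≠ y := by rintro rfl; exact hzk (hy k)
      rcases hall l with rfl | rfl | rfl
      · exact Finset.disjoint_left.1 hKP hz ((memP _ z).2 ⟨hzy, hzx, hzl⟩)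
      · exact Finset.disjoint_left.1 hKQ hz ((memP _ z).2 ⟨hzy, hzx, hzl⟩)
      · exact hzk hzl
  obtain ⟨E0, c0, g0, t0, f0⟩ := lk 0 1 2 (by decide) (by decide) (by decide) (by decide)
  obtain ⟨E1, c1, g1, t1, f1⟩ := lk 1 2 0 (by decide) (by decide) (by decide) (by decide)
  obtain ⟨E2, c2, g2, t2, f2⟩ := lk 2 0 1 (by decide) (by decide) (by decide) (by decide)
  have dE : ∀ i j i' j' : Fin 3, ∀ E E' : Finset W, (∀ l, l = i ∨ l = j ∨ l = i' ∨ l = j') →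
      (∀ z ∈ E, ∀ l, z ∉ C l) → (∀ z ∈ E', ∀ l, z ∉ C l) →
      (E = ∅ ∨ (Conn H E ∧ Tch H E (P i) ∧ Tch H E (P j))) →
      (E' = ∅ ∨ (Conn H E' ∧ Tch H E' (P i') ∧ Tch H E' (P j'))) → Disjoint E E' := by
    intro i j i' j' E E' hall hE hE' f f'
    rcases f with rfl | ⟨f1, f2, f3⟩
    · simp
    rcases f' with rfl | ⟨f1', f2', f3'⟩
    · simp
    by_contra hnd
    obtain ⟨z, hz, hz'⟩ := Finset.not_disjoint_iff.1 hnd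
    apply nocom (E ∪ E') (conn_union_aux f1 f1' (Or.inr ⟨z, hz, hz'⟩))
    · intro z hz
      rcases Finset.mem_union.1 hz with h | h
      · exact hE z h
      · exact hE' z h
    · intro l
      rcases hall l with rfl | rfl | rfl | rfl
      · exact f2.mono Finset.subset_union_left (Finset.Subset.refl _)
      · exact f3.mono Finset.subset_union_left (Finset.Subset.refl _)
      · exact f2'.mono Finset.subset_union_right (Finset.Subset.refl _)
      · exact f3'.mono Finset.subset_union_right (Finset.Subset.refl _)
  have d01 := dE 0 1 1 2 E0 E1 (by decide) c0 c1 f0 f1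
  have d02 := dE 0 1 2 0 E0 E2 (by decide) c0 c2 f0 f2
  have d12 := dE 1 2 2 0 E1 E2 (by decide) c1 c2 f1 f2
  have dPE : ∀ i, ∀ E : Finset W, (∀ z ∈ E, ∀ l, z ∉ C l) → Disjoint (P i) E := fun i E hE =>
    Finset.disjoint_left.2 (fun z hz hz' => hE z hz' i ((memP i z).1 hz).2.2)
  have dU : ∀ i j, ∀ E E' : Finset W, i ≠ j → (∀ z ∈ E, ∀ l, z ∉ C l) → (∀ z ∈ E', ∀ l, z ∉ C l) →
      Disjoint E E' → Disjoint (P i ∪ E) (P j ∪ E') := by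
    intro i j E E' hij h h' hd
    rw [Finset.disjoint_union_left, Finset.disjoint_union_right, Finset.disjoint_union_right]
    exact ⟨⟨disP i j hij, dPE i E' h'⟩, (dPE j E h).symm, hd⟩
  have dxU : ∀ i, ∀ E : Finset W, (∀ z ∈ E, ∀ l, z ∉ C l) → Disjoint {x} (P i ∪ E) := by
    intro i E h
    rw [Finset.disjoint_union_right]
    exact ⟨dx i, by rw [Finset.disjoint_singleton_left]; exact fun h' => h x h' 0 (hx 0)⟩
  have dyU : ∀ i, ∀ E : Finset W, (∀ z ∈ E, ∀ l, z ∉ C l) → Disjoint {y} (P i ∪ E) := by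
    intro i E h
    rw [Finset.disjoint_union_right]
    exact ⟨dy i, by rw [Finset.disjoint_singleton_left]; exact fun h' => h y h' 0 (hy 0)⟩
  have rf : ∀ S : Finset W, S ⊆ S := fun S => Finset.Subset.refl S
  have ul : ∀ S T : Finset W, S ⊆ S ∪ T := fun S T => Finset.subset_union_left
  apply hK5
  apply mk_K5 (A := ![{x}, {y}, P 0 ∪ E0, P 1 ∪ E1, P 2 ∪ E2])
  · intro i
    fin_cases i
    · exact conn_singleton x
    · exact conn_singleton y
    · exact g0
    · exact g1
    · exact g2
  · intro i j hij
    fin_cases i <;> fin_cases j <;> first | exact absurd hij (by decide) | skip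
    · simpa using hne
    · exact dxU 0 E0 c0
    · exact dxU 1 E1 c1
    · exact dxU 2 E2 c2
    · exact dyU 0 E0 c0
    · exact dyU 1 E1 c1
    · exact dyU 2 E2 c2
    · exact dU 0 1 _ _ (by decide) c0 c1 d01
    · exact dU 0 2 _ _ (by decide) c0 c2 d02
    · exact dU 1 2 _ _ (by decide) c1 c2 d12
  · intro i j hij
    fin_cases i <;> fin_cases j <;> first | exact absurd hij (by decide) | skip
    · exact ⟨x, by simp, y, by simp, hxy⟩
    · exact (tx 0).mono (rf _) (ul _ _)
    · exact (tx 1).mono (rf _) (ul _ _)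
    · exact (tx 2).mono (rf _) (ul _ _)
    · exact (ty 0).mono (rf _) (ul _ _)
    · exact (ty 1).mono (rf _) (ul _ _)
    · exact (ty 2).mono (rf _) (ul _ _)
    · exact t0.mono (rf _) (ul _ _)
    · exact t2.symm.mono (ul _ _) (rf _)
    · exact t1.mono (rf _) (ul _ _)

variable (H) in
/-- the edge labelling `ω` is a coboundary on `S` -/
def Bal (ω : W → W → ZMod 2) (S : Finset W) : Prop :=
  ∃ φ : W → ZMod 2, ∀ x ∈ S, ∀ y ∈ S, H.Adj x y → ω x y = φ x + φ y

lemma Bal.mono {ω : W → W → ZMod 2} {S T : Finset W} (h : Bal H ω T) (hs : S ⊆ T) : Bal H ω S := by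
  obtain ⟨φ, h⟩ := h
  exact ⟨φ, fun x hx y hy => h x (hs hx) y (hs hy)⟩

lemma pot_normalize {ω : W → W → ZMod 2} {S T X : Finset W} (hX : Conn H X) (hS : X ⊆ S) (hT : X ⊆ T)
    {φ : W → ZMod 2} (hφ : ∀ x ∈ S, ∀ y ∈ S, H.Adj x y → ω x y = φ x + φ y)
    (h : Bal H ω T) : ∃ ψ : W → ZMod 2, (∀ x ∈ T, ∀ y ∈ T, H.Adj x y → ω x y = ψ x + ψ y) ∧
      ∀ x ∈ X, ψ x = φ x := by
  obtain ⟨ψ, hψ⟩ := h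
  obtain ⟨x0, hx0⟩ := hX.1
  have key : X.filter (fun x => ψ x + (ψ x0 + φ x0) = φ x) = X := by
    apply conn_closed hX (Finset.filter_subset _ _)
    · refine ⟨x0, Finset.mem_filter.2 ⟨hx0, ?_⟩⟩
      generalize ψ x0 = p
      generalize φ x0 = q
      revert p q; decide
    · intro u hu v hv huv
      obtain ⟨hu', h1⟩ := Finset.mem_filter.1 hu
      refine Finset.mem_filter.2 ⟨hv, ?_⟩
      have h2 := hφ u (hS hu') v (hS hv) huv
      rw [hψ u (hT hu') v (hT hv) huv] at h2
      have d : ∀ p1 p2 p3 p4 p5 : ZMod 2, p1 + p5 = p3 → p1 + p2 = p3 + p4 → p2 + p5 = p4 := by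
        decide
      exact d _ _ _ _ _ h1 h2
  refine ⟨fun x => ψ x + (ψ x0 + φ x0), ?_, ?_⟩
  · intro x hx y hy hxy
    rw [hψ x hx y hy hxy]
    have d : ∀ c p q : ZMod 2, p + q = (p + c) + (q + c) := by decide
    exact d _ _ _
  · intro x hx
    rw [← key] at hx
    exact (Finset.mem_filter.1 hx).2

lemma maj_edge {a1 a2 a3 u v : W} {p1 p2 p3 q1 q2 q3 w : ZMod 2}
    (h12 : a1 ≠ a2) (h13 : a1 ≠ a3) (h23 : a2 ≠ a3)
    (e1 : u ≠ a1 → v ≠ a1 → w = p1 + q1) (e2 : u ≠ a2 → v ≠ a2 → w = p2 + q2)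
    (e3 : u ≠ a3 → v ≠ a3 → w = p3 + q3)
    (u1 : u = a1 → p2 = p3) (u2 : u = a2 → p1 = p3) (u3 : u = a3 → p1 = p2)
    (v1 : v = a1 → q2 = q3) (v2 : v = a2 → q1 = q3) (v3 : v = a3 → q1 = q2) :
    w = (p1 * p2 + p2 * p3 + p3 * p1) + (q1 * q2 + q2 * q3 + q3 * q1) := by
  have d0 : ∀ p1 p2 p3 q1 q2 q3 w : ZMod 2, w = p1 + q1 → w = p2 + q2 → w = p3 + q3 →
    w = (p1 * p2 + p2 * p3 + p3 * p1) + (q1 * q2 + q2 * q3 + q3 * q1) := by decide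
  have d1 : ∀ p1 p2 p3 q1 q2 q3 w : ZMod 2, w = p2 + q2 → w = p3 + q3 → (p2 = p3 ∨ q2 = q3) →
    w = (p1 * p2 + p2 * p3 + p3 * p1) + (q1 * q2 + q2 * q3 + q3 * q1) := by decide
  have d2 : ∀ p1 p2 p3 q1 q2 q3 w : ZMod 2, w = p1 + q1 → w = p3 + q3 → (p1 = p3 ∨ q1 = q3) →
    w = (p1 * p2 + p2 * p3 + p3 * p1) + (q1 * q2 + q2 * q3 + q3 * q1) := by decide
  have d3 : ∀ p1 p2 p3 q1 q2 q3 w : ZMod 2, w = p1 + q1 → w = p2 + q2 → (p1 = p2 ∨ q1 = q2) →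
    w = (p1 * p2 + p2 * p3 + p3 * p1) + (q1 * q2 + q2 * q3 + q3 * q1) := by decide
  have f12 : ∀ p1 p2 p3 q1 q2 q3 w : ZMod 2, w = p3 + q3 → p2 = p3 → q1 = q3 →
    w = (p1 * p2 + p2 * p3 + p3 * p1) + (q1 * q2 + q2 * q3 + q3 * q1) := by decide
  have f21 : ∀ p1 p2 p3 q1 q2 q3 w : ZMod 2, w = p3 + q3 → p1 = p3 → q2 = q3 →
    w = (p1 * p2 + p2 * p3 + p3 * p1) + (q1 * q2 + q2 * q3 + q3 * q1) := by decide
  have f13 : ∀ p1 p2 p3 q1 q2 q3 w : ZMod 2, w = p2 + q2 → p2 = p3 → q1 = q2 →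
    w = (p1 * p2 + p2 * p3 + p3 * p1) + (q1 * q2 + q2 * q3 + q3 * q1) := by decide
  have f31 : ∀ p1 p2 p3 q1 q2 q3 w : ZMod 2, w = p2 + q2 → p1 = p2 → q2 = q3 →
    w = (p1 * p2 + p2 * p3 + p3 * p1) + (q1 * q2 + q2 * q3 + q3 * q1) := by decide
  have f23 : ∀ p1 p2 p3 q1 q2 q3 w : ZMod 2, w = p1 + q1 → p1 = p3 → q1 = q2 →
    w = (p1 * p2 + p2 * p3 + p3 * p1) + (q1 * q2 + q2 * q3 + q3 * q1) := by decide
  have f32 : ∀ p1 p2 p3 q1 q2 q3 w : ZMod 2, w = p1 + q1 → p1 = p2 → q1 = q3 →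
    w = (p1 * p2 + p2 * p3 + p3 * p1) + (q1 * q2 + q2 * q3 + q3 * q1) := by decide
  by_cases hu1 : u = a1
  · by_cases hv2 : v = a2
    · exact f12 _ _ _ _ _ _ _ (e3 (hu1 ▸ h13) (hv2 ▸ h23)) (u1 hu1) (v2 hv2)
    by_cases hv3 : v = a3
    · exact f13 _ _ _ _ _ _ _ (e2 (hu1 ▸ h12) hv2) (u1 hu1) (v3 hv3)
    exact d1 _ _ _ _ _ _ _ (e2 (hu1 ▸ h12) hv2) (e3 (hu1 ▸ h13) hv3) (Or.inl (u1 hu1))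
  by_cases hu2 : u = a2
  · by_cases hv1 : v = a1
    · exact f21 _ _ _ _ _ _ _ (e3 (hu2 ▸ h23) (hv1 ▸ h13)) (u2 hu2) (v1 hv1)
    by_cases hv3 : v = a3
    · exact f23 _ _ _ _ _ _ _ (e1 hu1 hv1) (u2 hu2) (v3 hv3)
    exact d2 _ _ _ _ _ _ _ (e1 hu1 hv1) (e3 (hu2 ▸ h23) hv3) (Or.inl (u2 hu2))
  by_cases hu3 : u = a3
  · by_cases hv1 : v = a1
    · exact f31 _ _ _ _ _ _ _ (e2 hu2 (hv1 ▸ h12)) (u3 hu3) (v1 hv1)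
    by_cases hv2 : v = a2
    · exact f32 _ _ _ _ _ _ _ (e1 hu1 hv1) (u3 hu3) (v2 hv2)
    exact d3 _ _ _ _ _ _ _ (e1 hu1 hv1) (e2 hu2 hv2) (Or.inl (u3 hu3))
  by_cases hv1 : v = a1
  · exact d1 _ _ _ _ _ _ _ (e2 hu2 (hv1 ▸ h12)) (e3 hu3 (hv1 ▸ h13)) (Or.inr (v1 hv1))
  by_cases hv2 : v = a2
  · exact d2 _ _ _ _ _ _ _ (e1 hu1 hv1) (e3 hu3 (hv2 ▸ h23)) (Or.inr (v2 hv2))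
  by_cases hv3 : v = a3
  · exact d3 _ _ _ _ _ _ _ (e1 hu1 hv1) (e2 hu2 hv2) (Or.inr (v3 hv3))
  exact d0 _ _ _ _ _ _ _ (e1 hu1 hv1) (e2 hu2 hv2) (e3 hu3 hv3)

/-- the majority lemma -/
lemma bal_majority {ω : W → W → ZMod 2} {U X : Finset W} (hX : Conn H X) (hXU : X ⊆ U)
    {a1 a2 a3 : W} (n1 : a1 ∉ X) (n2 : a2 ∉ X) (n3 : a3 ∉ X)
    (m1 : a1 ∈ U) (m2 : a2 ∈ U) (m3 : a3 ∈ U)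
    (h12 : a1 ≠ a2) (h13 : a1 ≠ a3) (h23 : a2 ≠ a3)
    (t1 : ∃ u ∈ X, H.Adj u a1) (t2 : ∃ u ∈ X, H.Adj u a2) (t3 : ∃ u ∈ X, H.Adj u a3)
    (b1 : Bal H ω (U.erase a1)) (b2 : Bal H ω (U.erase a2)) (b3 : Bal H ω (U.erase a3)) :
    Bal H ω U := by
  have sub : ∀ a, a ∉ X → X ⊆ U.erase a := fun a ha u hu =>
    Finset.mem_erase.2 ⟨fun h => ha (h ▸ hu), hXU hu⟩
  obtain ⟨φ1, h1⟩ := b1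
  obtain ⟨φ2, h2, g2⟩ := pot_normalize hX (sub a1 n1) (sub a2 n2) h1 b2
  obtain ⟨φ3, h3, g3⟩ := pot_normalize hX (sub a1 n1) (sub a3 n3) h1 b3
  have agree : ∀ (a b c : W) (φ ψ : W → ZMod 2), c ∈ U → c ≠ a → c ≠ b → a ∉ X → b ∉ X →
      (∀ x ∈ U.erase a, ∀ y ∈ U.erase a, H.Adj x y → ω x y = φ x + φ y) →
      (∀ x ∈ U.erase b, ∀ y ∈ U.erase b, H.Adj x y → ω x y = ψ x + ψ y) →
      (∀ x ∈ X, φ x = ψ x) → (∃ u ∈ X, H.Adj u c) → φ c = ψ c := by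
    rintro a b c φ ψ hc hca hcb ha hb hφ hψ hag ⟨u, hu, huc⟩
    have k1 := hφ u (sub a ha hu) c (by simp [hc, hca]) huc
    have k2 := hψ u (sub b hb hu) c (by simp [hc, hcb]) huc
    rw [k1, hag u hu] at k2
    exact add_left_cancel k2
  have A1 := agree a2 a3 a1 φ2 φ3 m1 h12 h13 n2 n3 h2 h3 (fun x hx => by rw [g2 x hx, g3 x hx]) t1
  have A2 := agree a1 a3 a2 φ1 φ3 m2 h12.symm h23 n1 n3 h1 h3 (fun x hx => by rw [g3 x hx]) t2
  have A3 := agree a1 a2 a3 φ1 φ2 m3 h13.symm h23.symm n1 n2 h1 h2 (fun x hx => by rw [g2 x hx]) t3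
  refine ⟨fun x => φ1 x * φ2 x + φ2 x * φ3 x + φ3 x * φ1 x, ?_⟩
  intro u hu v hv huv
  refine maj_edge (u := u) (v := v) h12 h13 h23 ?_ ?_ ?_ ?_ ?_ ?_ ?_ ?_ ?_
  · exact fun hu' hv' => h1 u (by simp [hu, hu']) v (by simp [hv, hv']) huv
  · exact fun hu' hv' => h2 u (by simp [hu, hu']) v (by simp [hv, hv']) huv
  · exact fun hu' hv' => h3 u (by simp [hu, hu']) v (by simp [hv, hv']) huv
  · rintro rfl; exact A1
  · rintro rfl; exact A2
  · rintro rfl; exact A3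
  · rintro rfl; exact A1
  · rintro rfl; exact A2
  · rintro rfl; exact A3


lemma bal_extend {ω : W → W → ZMod 2} (hω : ∀ x y, ω x y = ω y x) {U : Finset W} {x p : W}
    (hp : ∀ y ∈ U, H.Adj x y → y = p) (hb : Bal H ω (U.erase x)) : Bal H ω U := by
  obtain ⟨φ, hφ⟩ := hb
  have d : ∀ a b : ZMod 2, a = (b + a) + b := by decide
  have d' : ∀ a b : ZMod 2, a = b + (b + a) := by decide
  refine ⟨Function.update φ x (φ p + ω x p), ?_⟩
  intro u hu v hv huv
  by_cases h1 : u = x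
  · subst h1
    have hvp := hp v hv huv
    subst hvp
    have hne : v ≠ u := (H.ne_of_adj huv).symm
    rw [Function.update_self, Function.update_of_ne hne]
    exact d _ _
  · by_cases h2 : v = x
    · subst h2
      have hup := hp u hu huv.symm
      subst hup
      rw [Function.update_self, Function.update_of_ne h1, hω u v]
      exact d' _ _
    · rw [Function.update_of_ne h1, Function.update_of_ne h2]
      exact hφ u (by simp [h1, hu]) v (by simp [h2, hv]) huv

lemma face_exists {ω : W → W → ZMod 2} (hω : ∀ x y, ω x y = ω y x)
    (hdeg : ∀ u, 4 ≤ (Finset.univ.filter (H.Adj u)).card)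
    (h3 : ∀ X : Finset W, X.Nonempty →
      (Finset.univ.filter (fun y => y ∉ X ∧ ∃ u ∈ X, H.Adj u y)).card ≤ 2 →
      ∀ z, z ∈ X ∨ ∃ u ∈ X, H.Adj u z)
    (hnb : ¬ Bal H ω Finset.univ) :
    ∃ C, IsFace H C ∧ ¬ Bal H ω C ∧ ∀ c ∈ C, Bal H ω (C.erase c) := by
  have hne : Nonempty W := by
    by_contra h
    rw [not_nonempty_iff] at h
    exact hnb ⟨fun _ => 0, fun x => (h.false x).elim⟩
  obtain ⟨b, hb⟩ : ∃ b, ¬ Bal H ω (Finset.univ.erase b) := by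
    by_contra hcon
    push Not at hcon
    obtain ⟨x⟩ := hne
    have h4 : 2 < (Finset.univ.filter (H.Adj x)).card := by have := hdeg x; omega
    obtain ⟨a1, a2, a3, k1, k2, k3, e12, e13, e23⟩ := Finset.two_lt_card_iff.1 h4
    simp only [Finset.mem_filter, Finset.mem_univ, true_and] at k1 k2 k3
    exact hnb (bal_majority (conn_singleton x) (Finset.subset_univ _)
      (by simpa using k1.ne.symm) (by simpa using k2.ne.symm) (by simpa using k3.ne.symm)
      (Finset.mem_univ _) (Finset.mem_univ _) (Finset.mem_univ _) e12 e13 e23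
      ⟨x, by simp, k1⟩ ⟨x, by simp, k2⟩ ⟨x, by simp, k3⟩ (hcon _) (hcon _) (hcon _))
  let F := (Finset.univ : Finset (Finset W)).filter (fun B => Conn H B ∧ ¬ Bal H ω Bᶜ)
  have hF : F.Nonempty := ⟨{b}, by
    refine Finset.mem_filter.2 ⟨Finset.mem_univ _, conn_singleton b, ?_⟩
    intro h
    apply hb
    refine h.mono ?_
    intro z hz
    simpa using hz⟩
  obtain ⟨B, hB, hmax⟩ := Finset.exists_max_image F Finset.card hF
  simp only [F, Finset.mem_filter, Finset.mem_univ, true_and] at hB hmax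
  obtain ⟨hBc, hBb⟩ := hB
  have hE0 : ∀ c ∈ Bᶜ, (∃ b ∈ B, H.Adj b c) → Bal H ω (Bᶜ.erase c) := by
    rintro c hc ⟨b, hb, hbc⟩
    by_contra hn
    have hcB : c ∉ B := Finset.mem_compl.1 hc
    have := hmax (insert c B) ⟨conn_insert hBc hb hbc, by rwa [Finset.compl_insert]⟩
    rw [Finset.card_insert_of_notMem hcB] at this
    omega
  have hadj : ∀ u ∈ Bᶜ, ∃ b ∈ B, H.Adj b u := by
    intro u hu
    by_contra hn
    obtain ⟨X, hXS, huX, hXc, hcl⟩ := exists_comp (H := H)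
      (S := Bᶜ.filter (fun z => ¬ ∃ b ∈ B, H.Adj b z)) (Finset.mem_filter.2 ⟨hu, hn⟩)
    have hN : ∀ y, y ∉ X → (∃ u ∈ X, H.Adj u y) → y ∈ Bᶜ ∧ ∃ b ∈ B, H.Adj b y := by
      rintro y hy ⟨w, hw, hwy⟩
      have hwS := Finset.mem_filter.1 (hXS hw)
      have hyB : y ∈ Bᶜ := by
        rw [Finset.mem_compl]
        intro hyB
        exact hwS.2 ⟨y, hyB, hwy.symm⟩
      refine ⟨hyB, ?_⟩
      by_contra hn'
      exact hy (hcl w hw y (Finset.mem_filter.2 ⟨hyB, hn'⟩) hwy)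
    have hcard : 2 < (Finset.univ.filter (fun y => y ∉ X ∧ ∃ u ∈ X, H.Adj u y)).card := by
      by_contra hle
      obtain ⟨b', hb'⟩ := hBc.1
      have hbX : b' ∉ X := fun h =>
        (Finset.mem_compl.1 (Finset.mem_filter.1 (hXS h)).1) hb'
      rcases h3 X ⟨u, huX⟩ (by omega) b' with h | h
      · exact hbX h
      · exact (Finset.mem_compl.1 (hN b' hbX h).1) hb'
    obtain ⟨a1, a2, a3, k1, k2, k3, e12, e13, e23⟩ := Finset.two_lt_card_iff.1 hcard
    simp only [Finset.mem_filter, Finset.mem_univ, true_and] at k1 k2 k3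
    have l1 := hN a1 k1.1 k1.2
    have l2 := hN a2 k2.1 k2.2
    have l3 := hN a3 k3.1 k3.2
    exact hBb (bal_majority hXc (fun z hz => (Finset.mem_filter.1 (hXS hz)).1)
      k1.1 k2.1 k3.1 l1.1 l2.1 l3.1 e12 e13 e23 k1.2 k2.2 k3.2
      (hE0 _ l1.1 l1.2) (hE0 _ l2.1 l2.2) (hE0 _ l3.1 l3.2))
  have hE : ∀ c ∈ Bᶜ, Bal H ω (Bᶜ.erase c) := fun c hc => hE0 c hc (hadj c hc)
  clear hE0 hadj hmax hF
  refine ⟨Bᶜ, ⟨?_, by rwa [compl_compl], ?_⟩, hBb, hE⟩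
  · generalize Bᶜ = U at *
    refine ⟨?_, ?_⟩
    · rw [Finset.nonempty_iff_ne_empty]
      rintro rfl
      exact hBb ⟨fun _ => 0, by simp⟩
    · intro Z hZ hZne hZU
      by_contra hn
      push Not at hn
      obtain ⟨z, hz⟩ := hZne
      obtain ⟨c, hcU, hcZ⟩ : ∃ c ∈ U, c ∉ Z := by
        by_contra hh
        push Not at hh
        exact hZU (Finset.Subset.antisymm hZ hh)
      obtain ⟨φ1, h1⟩ := hE c hcU
      obtain ⟨φ2, h2⟩ := hE z (hZ hz)
      apply hBb
      refine ⟨fun x => if x ∈ Z then φ1 x else φ2 x, ?_⟩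
      intro x hx y hy hxy
      by_cases hxZ : x ∈ Z
      · by_cases hyZ : y ∈ Z
        · simp only [hxZ, hyZ, if_true]
          exact h1 x (Finset.mem_erase.2 ⟨fun h => hcZ (h ▸ hxZ), hx⟩) y
            (Finset.mem_erase.2 ⟨fun h => hcZ (h ▸ hyZ), hy⟩) hxy
        · exact absurd hxy (hn x hxZ y hy hyZ)
      · by_cases hyZ : y ∈ Z
        · exact absurd hxy.symm (hn y hyZ x hx hxZ)
        · simp only [hxZ, hyZ, if_false]
          exact h2 x (Finset.mem_erase.2 ⟨fun h => hxZ (h ▸ hz), hx⟩) y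
            (Finset.mem_erase.2 ⟨fun h => hyZ (h ▸ hz), hy⟩) hxy
  · generalize Bᶜ = U at *
    intro x hx
    by_contra hc
    rcases lt_or_ge 2 (U.filter (H.Adj x)).card with h4 | h4
    · obtain ⟨a1, a2, a3, k1, k2, k3, e12, e13, e23⟩ := Finset.two_lt_card_iff.1 h4
      simp only [Finset.mem_filter] at k1 k2 k3
      exact hBb (bal_majority (conn_singleton x) (by simpa using hx)
        (by simpa using k1.2.ne.symm) (by simpa using k2.2.ne.symm) (by simpa using k3.2.ne.symm)
        k1.1 k2.1 k3.1 e12 e13 e23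
        ⟨x, by simp, k1.2⟩ ⟨x, by simp, k2.2⟩ ⟨x, by simp, k3.2⟩ (hE _ k1.1) (hE _ k2.1) (hE _ k3.1))
    · have h5 : (U.filter (H.Adj x)).card ≤ 1 := by omega
      obtain ⟨p, hp⟩ := Finset.card_le_one_iff_subset_singleton.1 h5
      exact hBb (bal_extend hω (p := p) (fun y hy hxy =>
        Finset.mem_singleton.1 (hp (Finset.mem_filter.2 ⟨hy, hxy⟩))) (hE x hx))

lemma sum_ends {C : Finset W} {a b : W} (ha : a ∈ C) (hb : b ∈ C) (hab : a ≠ b) (φ : W → ZMod 2) :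
    ∑ u ∈ C, (if u ∈ s(a, b) then φ u else 0) = φ a + φ b := by
  rw [← Finset.sum_filter]
  have : C.filter (fun u => u ∈ s(a, b)) = {a, b} := by
    ext z
    simp only [Finset.mem_filter, Sym2.mem_iff, Finset.mem_insert, Finset.mem_singleton]
    constructor
    · exact fun h => h.2
    · rintro (rfl | rfl)
      · exact ⟨ha, Or.inl rfl⟩
      · exact ⟨hb, Or.inr rfl⟩
  rw [this, Finset.sum_pair hab]

lemma bal_cycle {C : Finset W} (hC : Cyc H C) {f : Sym2 W → ZMod 2}
    (hsum : ∑ e ∈ eIn H C, f e = 0) {x : W} (hx : x ∈ C)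
    (hb : Bal H (fun a b => f s(a, b)) (C.erase x)) : Bal H (fun a b => f s(a, b)) C := by
  obtain ⟨φ0, hφ0⟩ := hb
  obtain ⟨p, q, hpq, hpqe⟩ := Finset.card_eq_two.1 (hC.2 x hx)
  have hp : p ∈ C ∧ H.Adj x p := by
    have : p ∈ C.filter (H.Adj x) := by rw [hpqe]; simp
    exact Finset.mem_filter.1 this
  have hq : q ∈ C ∧ H.Adj x q := by
    have : q ∈ C.filter (H.Adj x) := by rw [hpqe]; simp
    exact Finset.mem_filter.1 this
  obtain ⟨φ, hφx, hφ⟩ : ∃ φ : W → ZMod 2, φ x = φ p + f s(x, p) ∧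
      ∀ u ∈ C, ∀ v ∈ C, u ≠ x → v ≠ x → H.Adj u v → f s(u, v) = φ u + φ v := by
    refine ⟨Function.update φ0 x (φ0 p + f s(x, p)), ?_, ?_⟩
    · rw [Function.update_self, Function.update_of_ne hp.2.ne.symm]
    · intro u hu v hv hux hvx huv
      rw [Function.update_of_ne hux, Function.update_of_ne hvx]
      exact hφ0 u (by simp [hux, hu]) v (by simp [hvx, hv]) huv
  have d0 : ∀ a b : ZMod 2, a + (b + a + b) = 0 := by decide
  have d1 : ∀ a b c : ZMod 2, a = b + c → a + (b + c) = 0 := by decide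
  have d2 : ∀ a b c : ZMod 2, a + (b + c) = 0 → a = b + c := by decide
  let g : Sym2 W → ZMod 2 := fun e => f e + ∑ u ∈ C, (if u ∈ e then φ u else 0)
  have hgsum : ∑ e ∈ eIn H C, g e = 0 := by
    simp only [g]
    rw [Finset.sum_add_distrib, hsum, zero_add, Finset.sum_comm]
    apply Finset.sum_eq_zero
    intro u hu
    rw [← Finset.sum_filter, Finset.sum_const, inc_count hu, hC.2 u hu, two_nsmul]
    exact CharTwo.add_self_eq_zero _
  have hgx : ∀ y ∈ C, H.Adj x y → y ≠ q → g s(x, y) = 0 := by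
    intro y hy hxy hyq
    have hyp : y = p := by
      rcases two_nbrs hC hx hp.1 hq.1 hpq hp.2 hq.2 hy hxy with h | h
      · exact h
      · exact absurd h hyq
    subst hyp
    simp only [g]
    rw [sum_ends hx hy hxy.ne, hφx]
    exact d0 _ _
  have hg0 : ∀ e ∈ eIn H C, e ≠ s(x, q) → g e = 0 := by
    intro e he hne
    simp only [eIn, Finset.mem_filter, SimpleGraph.mem_edgeFinset] at he
    induction e using Sym2.ind with
    | _ a b =>
      have hab : H.Adj a b := he.1
      have ha : a ∈ C := he.2 a (by simp)
      have hb : b ∈ C := he.2 b (by simp)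
      by_cases hax : a = x
      · subst hax
        exact hgx b hb hab (fun h => hne (by rw [h]))
      by_cases hbx : b = x
      · subst hbx
        rw [Sym2.eq_swap]
        exact hgx a ha hab.symm (fun h => hne (by rw [h, Sym2.eq_swap]))
      simp only [g]
      rw [sum_ends ha hb hab.ne]
      exact d1 _ _ _ (hφ a ha b hb hax hbx hab)
  have hxq : s(x, q) ∈ eIn H C := by
    simp only [eIn, Finset.mem_filter, SimpleGraph.mem_edgeFinset]
    refine ⟨hq.2, ?_⟩
    intro v hv
    rcases Sym2.mem_iff.1 hv with rfl | rfl
    · exact hx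
    · exact hq.1
  have hlast : g s(x, q) = 0 := by
    rw [← Finset.sum_eq_single_of_mem _ hxq hg0]
    exact hgsum
  refine ⟨φ, ?_⟩
  intro a ha b hb hab
  have he : s(a, b) ∈ eIn H C := by
    simp only [eIn, Finset.mem_filter, SimpleGraph.mem_edgeFinset]
    refine ⟨hab, ?_⟩
    intro v hv
    rcases Sym2.mem_iff.1 hv with rfl | rfl
    · exact ha
    · exact hb
  have : g s(a, b) = 0 := by
    by_cases h : s(a, b) = s(x, q)
    · rw [h]; exact hlast
    · exact hg0 _ he h
  simp only [g] at this
  rw [sum_ends ha hb hab.ne] at this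
  exact d2 _ _ _ this

lemma euler_bound [Nonempty W]
    (hdeg : ∀ u, 4 ≤ (Finset.univ.filter (H.Adj u)).card)
    (h3 : ∀ X : Finset W, X.Nonempty →
      (Finset.univ.filter (fun y => y ∉ X ∧ ∃ u ∈ X, H.Adj u y)).card ≤ 2 →
      ∀ z, z ∈ X ∨ ∃ u ∈ X, H.Adj u z) :
    H.edgeFinset.card + 1 ≤ (Finset.univ.filter (IsFace H)).card + Fintype.card W := by
  let E := {e // e ∈ H.edgeFinset}
  let F := {C // C ∈ Finset.univ.filter (IsFace H)}
  let L : (E → ZMod 2) →ₗ[ZMod 2] (F → ZMod 2) :=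
    (Matrix.of (fun (C : F) (e : E) => if e.1 ∈ eIn H C.1 then (1 : ZMod 2) else 0)).mulVecLin
  let δ : (W → ZMod 2) →ₗ[ZMod 2] (E → ZMod 2) :=
    (Matrix.of (fun (e : E) (u : W) => if u ∈ e.1 then (1 : ZMod 2) else 0)).mulVecLin
  have hδ : ∀ (φ : W → ZMod 2) (a b : W) (h : s(a, b) ∈ H.edgeFinset),
      δ φ ⟨s(a, b), h⟩ = φ a + φ b := by
    intro φ a b h
    have hab : H.Adj a b := by simpa using h
    rw [← sum_ends (Finset.mem_univ a) (Finset.mem_univ b) hab.ne φ]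
    simp only [δ, Matrix.mulVecLin_apply, Matrix.mulVec, dotProduct, Matrix.of_apply, ite_mul,
      one_mul, zero_mul]
  have hker : LinearMap.ker L ≤ LinearMap.range δ := by
    intro w hw
    let f : Sym2 W → ZMod 2 := fun e => if h : e ∈ H.edgeFinset then w ⟨e, h⟩ else 0
    have hf : ∀ C, IsFace H C → ∑ e ∈ eIn H C, f e = 0 := by
      intro C hC
      have h1 : L w ⟨C, by simpa using hC⟩ = 0 := by
        rw [LinearMap.mem_ker.1 hw]; rfl
      rw [← h1]
      simp only [L, Matrix.mulVecLin_apply, Matrix.mulVec, dotProduct, Matrix.of_apply, ite_mul,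
        one_mul, zero_mul]
      have h2 : eIn H C = H.edgeFinset.filter (fun e => e ∈ eIn H C) := by
        ext e
        simp only [eIn, Finset.mem_filter]
        tauto
      rw [h2, Finset.sum_filter, ← Finset.sum_coe_sort H.edgeFinset]
      apply Finset.sum_congr rfl
      rintro ⟨e, he⟩ -
      simp only [← h2]
      simp only [f, he, dif_pos]
    have hbal : Bal H (fun a b => f s(a, b)) Finset.univ := by
      by_contra hnb
      obtain ⟨C, hC, hCb, hCe⟩ := face_exists (fun x y => by rw [Sym2.eq_swap]) hdeg h3 hnb
      obtain ⟨x, hx⟩ := hC.1.1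
      exact hCb (bal_cycle hC.cyc (hf C hC) hx (hCe x hx))
    obtain ⟨φ, hφ⟩ := hbal
    refine ⟨φ, ?_⟩
    ext ⟨e, he⟩
    induction e using Sym2.ind with
    | _ a b =>
      have hab : H.Adj a b := by simpa using he
      rw [hδ, ← hφ a (Finset.mem_univ _) b (Finset.mem_univ _) hab]
      simp only [f, he, dif_pos]
  have r1 := LinearMap.finrank_range_add_finrank_ker L
  have r2 := LinearMap.finrank_range_add_finrank_ker δ
  have r3 := Submodule.finrank_mono hker
  have r4 := Submodule.finrank_le (LinearMap.range L)
  have r5 : 0 < Module.finrank (ZMod 2) (LinearMap.ker δ) := by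
    have hmem : (fun _ => 1 : W → ZMod 2) ∈ LinearMap.ker δ := by
      rw [LinearMap.mem_ker]
      ext ⟨e, he⟩
      induction e using Sym2.ind with
      | _ a b =>
        rw [hδ]
        exact CharTwo.add_self_eq_zero _
    rw [Module.finrank_pos_iff_exists_ne_zero]
    refine ⟨⟨_, hmem⟩, ?_⟩
    intro h
    obtain ⟨x⟩ := ‹Nonempty W›
    have h01 : (1 : ZMod 2) = 0 := congrFun (congrArg Subtype.val h) x
    exact absurd h01 (by decide)
  rw [Module.finrank_fintype_fun_eq_card] at r1 r2 r4
  have c1 : Fintype.card E = H.edgeFinset.card := Fintype.card_coe _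
  have c2 : Fintype.card F = (Finset.univ.filter (IsFace H)).card := by
    rw [← Fintype.card_coe]
    exact Fintype.card_congr (Equiv.refl _)
  omega

lemma face_card {C : Finset W} (hC : IsFace H C) : (eIn H C).card = C.card := by
  have h := handshake (H := H) C
  rw [Finset.sum_congr rfl hC.2.2, Finset.sum_const, smul_eq_mul] at h
  omega

lemma face_card_ge {C : Finset W} (hC : IsFace H C) : 3 ≤ C.card := by
  obtain ⟨x, hx⟩ := hC.1.1
  have h : (insert x (C.filter (H.Adj x))).card ≤ C.card :=
    Finset.card_le_card (Finset.insert_subset hx (Finset.filter_subset _ _))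
  rw [Finset.card_insert_of_notMem (by simp), hC.2.2 x hx] at h
  omega

lemma tri_adj {C : Finset W} (hC : IsFace H C) (h3 : C.card = 3) {a b : W} (ha : a ∈ C) (hb : b ∈ C)
    (hab : a ≠ b) : H.Adj a b := by
  have h : C.filter (H.Adj a) = C.erase a := by
    apply Finset.eq_of_subset_of_card_le
    · intro z hz
      obtain ⟨hz1, hz2⟩ := Finset.mem_filter.1 hz
      exact Finset.mem_erase.2 ⟨hz2.ne.symm, hz1⟩
    · rw [Finset.card_erase_of_mem ha, hC.2.2 a ha, h3]
  have : b ∈ C.erase a := Finset.mem_erase.2 ⟨hab.symm, hb⟩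
  rw [← h] at this
  exact (Finset.mem_filter.1 this).2

lemma tri_third {C : Finset W} (h3 : C.card = 3) {a b : W} (ha : a ∈ C) (hb : b ∈ C)
    (hab : a ≠ b) : ∃ c ∈ C, c ≠ a ∧ c ≠ b ∧ C = {a, b, c} := by
  have hb' : b ∈ C.erase a := Finset.mem_erase.2 ⟨hab.symm, hb⟩
  have h1 : ((C.erase a).erase b).card = 1 := by
    rw [Finset.card_erase_of_mem hb', Finset.card_erase_of_mem ha, h3]
  obtain ⟨c, hc⟩ := Finset.card_eq_one.1 h1
  have hc' : c ∈ (C.erase a).erase b := by rw [hc]; simp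
  simp only [Finset.mem_erase] at hc'
  refine ⟨c, hc'.2.2, hc'.2.1, hc'.1, ?_⟩
  rw [← hc, Finset.insert_erase hb', Finset.insert_erase ha]

theorem core [Nonempty W] (A : W → Prop)
    (hdeg : ∀ u, 4 ≤ (Finset.univ.filter (H.Adj u)).card)
    (h3 : ∀ X : Finset W, X.Nonempty →
      (Finset.univ.filter (fun y => y ∉ X ∧ ∃ u ∈ X, H.Adj u y)).card ≤ 2 →
      ∀ z, z ∈ X ∨ ∃ u ∈ X, H.Adj u z)
    (hK33 : ¬ HasMinor H (completeBipartiteGraph (Fin 3) (Fin 3)))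
    (hK5 : ¬ HasMinor H (completeGraph (Fin 5)))
    (hA : ∀ u, (Finset.univ.filter (H.Adj u)).card < 5 → A u)
    (hK : ∀ a b c d, H.Adj a b → H.Adj a c → H.Adj a d → H.Adj b c → H.Adj b d → c = d)
    (hT : ∀ a b c, H.Adj a b → H.Adj a c → H.Adj b c → A a → A b → False) : False := by
  have heuler := euler_bound hdeg h3
  set F := Finset.univ.filter (IsFace H) with hFdef
  set T := F.filter (fun C => C.card = 3) with hTdef
  have hF : ∀ C ∈ F, IsFace H C := fun C hC => (Finset.mem_filter.1 hC).2
  have hTF : ∀ C ∈ T, IsFace H C ∧ C.card = 3 := fun C hC =>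
    ⟨hF C (Finset.mem_filter.1 hC).1, (Finset.mem_filter.1 hC).2⟩
  -- edges are in at most two faces
  have e2 : ∑ C ∈ F, C.card ≤ 2 * H.edgeFinset.card := by
    have h1 : ∑ C ∈ F, C.card = ∑ C ∈ F, (H.edgeFinset.filter (fun e => e ∈ eIn H C)).card := by
      apply Finset.sum_congr rfl
      intro C hC
      rw [← face_card (hF C hC)]
      congr 1
      ext e
      simp only [eIn, Finset.mem_filter]
      tauto
    rw [h1]
    simp only [Finset.card_filter]
    rw [Finset.sum_comm]
    simp only [← Finset.card_filter]
    calc _ ≤ ∑ e ∈ H.edgeFinset, 2 := by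
          apply Finset.sum_le_sum
          intro e he
          by_contra hlt
          push Not at hlt
          obtain ⟨C1, C2, C3, k1, k2, k3, n12, n13, n23⟩ := Finset.two_lt_card_iff.1 hlt
          simp only [Finset.mem_filter] at k1 k2 k3
          induction e using Sym2.ind with
          | _ x y =>
            have hxy : H.Adj x y := by simpa using he
            have hin : ∀ C, s(x, y) ∈ eIn H C → x ∈ C ∧ y ∈ C := by
              intro C hC
              have := (Finset.mem_filter.1 hC).2
              exact ⟨this x (by simp), this y (by simp)⟩
            refine face_three (C := ![C1, C2, C3]) ?_ ?_ hdeg hK33 hK5 (x := x) (y := y) ?_ ?_ hxy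
            · intro i
              fin_cases i
              · exact hF _ k1.1
              · exact hF _ k2.1
              · exact hF _ k3.1
            · intro i j hij
              fin_cases i <;> fin_cases j <;> simp_all
            · intro i
              fin_cases i
              · exact (hin _ k1.2).1
              · exact (hin _ k2.2).1
              · exact (hin _ k3.2).1
            · intro i
              fin_cases i
              · exact (hin _ k1.2).2
              · exact (hin _ k2.2).2
              · exact (hin _ k3.2).2
      _ = 2 * H.edgeFinset.card := by simp [mul_comm]
  have e3 : 4 * F.card ≤ ∑ C ∈ F, C.card + T.card := by
    rw [hTdef, Finset.card_filter _ F, ← Finset.sum_add_distrib]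
    calc 4 * F.card = ∑ C ∈ F, 4 := by simp [mul_comm]
      _ ≤ _ := by
        apply Finset.sum_le_sum
        intro C hC
        have := face_card_ge (hF C hC)
        split_ifs <;> omega
  have e4 : ∑ u : W, (Finset.univ.filter (H.Adj u)).card = 2 * H.edgeFinset.card := by
    rw [handshake]
    congr 2
    ext e
    simp [eIn]
  have e5 : ∀ u, 2 * (T.filter (fun C => u ∈ C)).card ≤ (Finset.univ.filter (H.Adj u)).card := by
    intro u
    have h1 : 2 * (T.filter (fun C => u ∈ C)).card =
        ∑ C ∈ T.filter (fun C => u ∈ C),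
          ((Finset.univ.filter (H.Adj u)).filter (fun y => y ∈ C)).card := by
      rw [Finset.sum_congr rfl (g := fun _ => 2)]
      · simp [mul_comm]
      · intro C hC
        obtain ⟨hC1, hC2⟩ := Finset.mem_filter.1 hC
        rw [← (hTF C hC1).1.2.2 u hC2]
        congr 1
        ext y
        simp [and_comm]
    rw [h1]
    simp only [Finset.card_filter _ (Finset.filter _ Finset.univ)]
    rw [Finset.sum_comm]
    simp only [← Finset.card_filter]
    calc _ ≤ ∑ y ∈ Finset.univ.filter (H.Adj u), 1 := by
          apply Finset.sum_le_sum
          intro y hy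
          have huy : H.Adj u y := (Finset.mem_filter.1 hy).2
          rw [Finset.card_le_one]
          intro C hC D hD
          simp only [Finset.mem_filter] at hC hD
          obtain ⟨⟨hC1, huC⟩, hyC⟩ := hC
          obtain ⟨⟨hD1, huD⟩, hyD⟩ := hD
          have hCf := hTF C hC1
          have hDf := hTF D hD1
          obtain ⟨c, hcC, hcu, hcy, hCe⟩ := tri_third hCf.2 huC hyC huy.ne
          obtain ⟨d, hdD, hdu, hdy, hDe⟩ := tri_third hDf.2 huD hyD huy.ne
          have : c = d := hK u y c d huy (tri_adj hCf.1 hCf.2 huC hcC hcu.symm)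
            (tri_adj hDf.1 hDf.2 huD hdD hdu.symm) (tri_adj hCf.1 hCf.2 hyC hcC hcy.symm)
            (tri_adj hDf.1 hDf.2 hyD hdD hdy.symm)
          rw [hCe, hDe, this]
      _ = _ := by simp
  have e6 : ∀ C ∈ T, 2 ≤ (Finset.univ.filter
      (fun u => u ∈ C ∧ 5 ≤ (Finset.univ.filter (H.Adj u)).card)).card := by
    intro C hC
    have hCf := hTF C hC
    have h1 : (C.filter (fun u => ¬ 5 ≤ (Finset.univ.filter (H.Adj u)).card)).card ≤ 1 := by
      rw [Finset.card_le_one]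
      intro a ha b hb
      by_contra hab
      obtain ⟨ha1, ha2⟩ := Finset.mem_filter.1 ha
      obtain ⟨hb1, hb2⟩ := Finset.mem_filter.1 hb
      obtain ⟨c, hc, hca, hcb, -⟩ := tri_third hCf.2 ha1 hb1 hab
      exact hT a b c (tri_adj hCf.1 hCf.2 ha1 hb1 hab) (tri_adj hCf.1 hCf.2 ha1 hc hca.symm)
        (tri_adj hCf.1 hCf.2 hb1 hc hcb.symm) (hA a (by omega)) (hA b (by omega))
    have h2 := Finset.card_filter_add_card_filter_not (s := C)
      (fun u => 5 ≤ (Finset.univ.filter (H.Adj u)).card)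
    have h4 : Finset.univ.filter (fun u => u ∈ C ∧ 5 ≤ (Finset.univ.filter (H.Adj u)).card) =
        C.filter (fun u => 5 ≤ (Finset.univ.filter (H.Adj u)).card) := by
      ext u
      simp
    rw [h4]
    have := hCf.2
    omega
  have e7 : 2 * T.card + 8 * Fintype.card W ≤ 2 * (2 * H.edgeFinset.card) := by
    have h1 : 2 * T.card ≤ ∑ C ∈ T, (Finset.univ.filter
        (fun u => u ∈ C ∧ 5 ≤ (Finset.univ.filter (H.Adj u)).card)).card := by
      calc 2 * T.card = ∑ C ∈ T, 2 := by simp [mul_comm]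
        _ ≤ _ := Finset.sum_le_sum e6
    have h2 : ∑ C ∈ T, (Finset.univ.filter
        (fun u => u ∈ C ∧ 5 ≤ (Finset.univ.filter (H.Adj u)).card)).card =
        ∑ u : W, (T.filter (fun C => u ∈ C ∧ 5 ≤ (Finset.univ.filter (H.Adj u)).card)).card := by
      exact Finset.sum_card_bipartiteAbove_eq_sum_card_bipartiteBelow
        (fun C u => u ∈ C ∧ 5 ≤ (Finset.univ.filter (H.Adj u)).card)
    have h4 : ∑ u : W, ((T.filter
        (fun C => u ∈ C ∧ 5 ≤ (Finset.univ.filter (H.Adj u)).card)).card + 8) ≤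
        ∑ u : W, 2 * (Finset.univ.filter (H.Adj u)).card := by
      apply Finset.sum_le_sum
      intro u _
      have hd := hdeg u
      have ht := e5 u
      by_cases h5 : 5 ≤ (Finset.univ.filter (H.Adj u)).card
      · simp only [h5, and_true]
        omega
      · simp only [h5, and_false, Finset.filter_false, Finset.card_empty]
        omega
    rw [Finset.sum_add_distrib, ← Finset.mul_sum, e4] at h4
    simp only [Finset.sum_const, Finset.card_univ, smul_eq_mul] at h4
    omega
  omega

lemma kconn_closed {G : SimpleGraph W} (h5 : IsKConnected 5 G) (X : Finset W) (hX : X.Nonempty)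
    (hc : (Finset.univ.filter (fun y => y ∉ X ∧ ∃ u ∈ X, G.Adj u y)).card ≤ 4) (z : W) :
    z ∈ X ∨ ∃ u ∈ X, G.Adj u z := by
  by_contra hz
  push Not at hz
  set N := Finset.univ.filter (fun y => y ∉ X ∧ ∃ u ∈ X, G.Adj u y) with hN
  have hcon := h5.2 (N : Set W) (Finset.finite_toSet _) (by rw [Set.ncard_coe_finset]; omega)
  obtain ⟨x, hx⟩ := hX
  have hxN : x ∈ ((N : Set W)ᶜ : Set W) := by simp [hN, hx]
  have hzN : z ∈ ((N : Set W)ᶜ : Set W) := by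
    simp only [hN, Set.mem_compl_iff, Finset.mem_coe, Finset.mem_filter, Finset.mem_univ, true_and]
    rintro ⟨-, u, hu, huz⟩
    exact hz.2 u hu huz
  have key : ∀ (a b : ((N : Set W)ᶜ : Set W)), (G.induce ((N : Set W)ᶜ)).Walk a b →
      a.1 ∈ X → b.1 ∈ X := by
    intro a b p
    induction p with
    | nil => exact id
    | @cons a b c hab p ih =>
      intro ha
      apply ih
      by_contra hb
      have hab' : G.Adj a.1 b.1 := by simpa using hab
      exact b.2 (by
        simp only [hN, Finset.mem_coe, Finset.mem_filter, Finset.mem_univ, true_and]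
        exact ⟨hb, a.1, ha, hab'⟩)
  obtain ⟨p⟩ := hcon.preconnected ⟨x, hxN⟩ ⟨z, hzN⟩
  exact hz.1 (key _ _ p hx)

lemma kconn_deg {G : SimpleGraph W} (h5 : IsKConnected 5 G) (u : W) :
    5 ≤ (Finset.univ.filter (G.Adj u)).card := by
  by_contra hlt
  push Not at hlt
  have heq : Finset.univ.filter (fun y => y ∉ ({u} : Finset W) ∧ ∃ w ∈ ({u} : Finset W), G.Adj w y) =
      Finset.univ.filter (G.Adj u) := by
    ext y
    simp only [Finset.mem_filter, Finset.mem_univ, true_and, Finset.mem_singleton, exists_eq_left]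
    exact ⟨fun h => h.2, fun h => ⟨h.ne.symm, h⟩⟩
  have hcl := kconn_closed h5 {u} (by simp) (by rw [heq]; omega)
  have hsub : (Finset.univ : Finset W) ⊆ insert u (Finset.univ.filter (G.Adj u)) := by
    intro z _
    rcases hcl z with h | ⟨w, hw, h⟩
    · simp [Finset.mem_singleton.1 h]
    · rw [Finset.mem_singleton.1 hw] at h
      simp [h]
  have h1 := Finset.card_le_card hsub
  have h2 := Finset.card_insert_le u (Finset.univ.filter (G.Adj u))
  have h3 := h5.1
  rw [← Finset.coe_univ, Set.ncard_coe_finset] at h3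
  omega

lemma deg_sub {U : Type*} [Fintype U] {G : SimpleGraph W} {H : SimpleGraph U} {v : W} {i : U ↪ W}
    (hadj : ∀ a b, H.Adj a b ↔ G.Adj (i a) (i b)) (hi : ∀ y, y ≠ v → ∃ u, i u = y) (u : U) :
    (Finset.univ.filter (G.Adj (i u))).card ≤
      (Finset.univ.filter (H.Adj u)).card + (if G.Adj v (i u) then 1 else 0) := by
  have hsub : Finset.univ.filter (G.Adj (i u)) ⊆
      (Finset.univ.filter (H.Adj u)).map i ∪ (if G.Adj v (i u) then {v} else ∅) := by
    intro y hy
    have hy' : G.Adj (i u) y := (Finset.mem_filter.1 hy).2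
    by_cases hyv : y = v
    · subst hyv
      simp [hy'.symm]
    · apply Finset.mem_union_left
      rw [Finset.mem_map]
      obtain ⟨y', rfl⟩ := hi y hyv
      exact ⟨y', by simpa [hadj] using hy', rfl⟩
  refine (Finset.card_le_card hsub).trans ((Finset.card_union_le _ _).trans ?_)
  rw [Finset.card_map]
  split_ifs <;> simp

theorem final_abs {U : Type*} [Fintype U] {G : SimpleGraph W} {H : SimpleGraph U} {v : W} {i : U ↪ W}
    (hadj : ∀ a b, H.Adj a b ↔ G.Adj (i a) (i b)) (hi : ∀ y, y ≠ v → ∃ u, i u = y)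
    (hiv : ∀ u, i u ≠ v) (h5 : IsKConnected 5 G)
    (hpl : IsPlanar H) : containsK4minus G := by
  by_contra hcon
  have hK4 : ∀ a b c d, G.Adj a b → G.Adj a c → G.Adj a d → G.Adj b c → G.Adj b d → c = d := by
    intro a b c d h1 h2 h3 h4 h6
    by_contra hne
    exact hcon ⟨a, b, c, d, h1.ne, h2.ne, h3.ne, h4.ne, h6.ne, hne, h1, h2, h3, h4, h6⟩
  have hne : Nonempty U := by
    have h := kconn_deg h5 v
    have : 0 < (Finset.univ.filter (G.Adj v)).card := by omega
    obtain ⟨y, hy⟩ := Finset.card_pos.1 this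
    have hvy : G.Adj v y := (Finset.mem_filter.1 hy).2
    obtain ⟨u, -⟩ := hi y hvy.ne.symm
    exact ⟨u⟩
  refine core (H := H) (fun u => G.Adj v (i u)) ?_ ?_ hpl.2 hpl.1 ?_ ?_ ?_
  · intro u
    have h1 := deg_sub hadj hi u
    have h2 := kconn_deg h5 (i u)
    split_ifs at h1 <;> omega
  · intro X hX hc z
    have hsub : Finset.univ.filter (fun y => y ∉ X.map i ∧ ∃ u ∈ X.map i, G.Adj u y) ⊆
        insert v ((Finset.univ.filter (fun y => y ∉ X ∧ ∃ u ∈ X, H.Adj u y)).map i) := by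
      intro y hy
      obtain ⟨hy1, w, hw, hwy⟩ := (Finset.mem_filter.1 hy).2
      by_cases hyv : y = v
      · simp [hyv]
      · apply Finset.mem_insert_of_mem
        rw [Finset.mem_map] at hw ⊢
        obtain ⟨w', hw', rfl⟩ := hw
        obtain ⟨y', rfl⟩ := hi y hyv
        refine ⟨y', Finset.mem_filter.2 ⟨Finset.mem_univ _, ?_, w', hw', (hadj _ _).2 hwy⟩, rfl⟩
        intro h
        exact hy1 (Finset.mem_map.2 ⟨_, h, rfl⟩)
    have h1 := Finset.card_le_card hsub
    have h2 := Finset.card_insert_le v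
      ((Finset.univ.filter (fun y => y ∉ X ∧ ∃ u ∈ X, H.Adj u y)).map i)
    rw [Finset.card_map] at h2
    rcases kconn_closed h5 (X.map i) (by simpa using hX) (by omega) (i z) with h | ⟨w, hw, h⟩
    · left
      simpa using h
    · right
      obtain ⟨w', hw', rfl⟩ := Finset.mem_map.1 hw
      exact ⟨w', hw', (hadj _ _).2 h⟩
  · intro u hu
    by_contra hn
    have h1 := deg_sub hadj hi u
    have h2 := kconn_deg h5 (i u)
    rw [if_neg hn] at h1
    omega
  · intro a b c d h1 h2 h3 h4 h6
    rw [hadj] at h1 h2 h3 h4 h6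
    exact i.injective (hK4 _ _ _ _ h1 h2 h3 h4 h6)
  · intro a b c h1 h2 h3 ha hb
    rw [hadj] at h1 h2 h3
    exact hiv c (hK4 _ _ _ v h1 h2 ha.symm h3 hb.symm)

theorem final_aux {G : SimpleGraph W} (h5 : IsKConnected 5 G) (v : W)
    (hpl : IsPlanar (G.induce ({v}ᶜ : Set W))) : containsK4minus G :=
  final_abs (i := ⟨Subtype.val, Subtype.val_injective⟩) (v := v) (fun a b => Iff.rfl)
    (fun y hy => ⟨⟨y, hy⟩, rfl⟩) (fun u => u.2) h5 hpl

end Core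

/-- Every 5-connected nonplanar apex graph contains a subdivision
of `K₅` or contains `K₄⁻` as a subgraph. -/
theorem stmt0 {V : Type*} [Fintype V] (G : SimpleGraph V)
    (h5 : IsKConnected 5 G) (hnp : ¬ IsPlanar G)
    (happex : ∃ v : V, IsPlanar (G.induce ({v}ᶜ : Set V))) :
    containsK5Subdivision G ∨ containsK4minus G := by
  obtain ⟨v, hv⟩ := happex
  exact Or.inr (final_aux h5 v hv)
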